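/- arXiv:2004.05206 — 2 statements merged into one kernel-verified Lean document; each statement's English description precedes it below -/
import Mathlib

section
/- Let 0<p<1 and let (x_n)_{n∈ℕ} together with (x_n*)_{n∈ℕ} be a quasi-greedy basis of ℓ_p. Then there exist constants 0<c≤C<∞ such that for every m≥1, c·m^{1/p} ≤ φ_l(m) and φ_u(m) ≤ C·m^{1/p}. In particular, the basis is democratic. -/
open scoped BigOperators

/-- For `0 < p < 1`, membership in `ℓ_p`: the sequence `(|f j|^p)_j` is summable. -/
def MemLpSeq (p : ℝ) (f : ℕ → ℝ) : Prop := Summable fun j => |f j| ^ p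

/-- The `p`-norm `‖f‖_p = (∑_j |f j|^p)^(1/p)`. -/
noncomputable def pNorm (p : ℝ) (f : ℕ → ℝ) : ℝ := (∑' j, |f j| ^ p) ^ (1 / p)

/-- `A` is a greedy set for the coefficient sequence `coef`. -/
def GreedySet (coef : ℕ → ℝ) (A : Finset ℕ) : Prop :=
  ∀ n ∈ A, ∀ k ∉ A, |coef k| ≤ |coef n|

/-- `(x_n)` together with bounded linear functionals `(x_n^*)` is a
(semi-normalized, fundamental, M-bounded Markushevich) basis of `ℓ_p`. -/
structure IsLpBasis (p : ℝ) (x : ℕ → ℕ → ℝ) (xs : ℕ → (ℕ → ℝ) → ℝ) : Prop where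
  mem : ∀ n, MemLpSeq p (x n)
  map_add : ∀ n f g, MemLpSeq p f → MemLpSeq p g → xs n (f + g) = xs n f + xs n g
  map_smul : ∀ n (c : ℝ) (f : ℕ → ℝ), MemLpSeq p f → xs n (fun j => c * f j) = c * xs n f
  bdd : ∃ b : ℝ, ∀ n f, MemLpSeq p f → |xs n f| ≤ b * pNorm p f
  biorth : ∀ m n, xs m (x n) = if m = n then (1 : ℝ) else 0
  dense : ∀ f, MemLpSeq p f → ∀ ε > 0, ∃ (A : Finset ℕ) (c : ℕ → ℝ),
    pNorm p (fun j => f j - ∑ n ∈ A, c n * x n j) < ε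
  norm_lb : ∃ c > 0, ∀ n, c ≤ pNorm p (x n)
  norm_ub : ∃ C : ℝ, ∀ n, pNorm p (x n) ≤ C

/-- The basis is quasi-greedy: greedy projections are uniformly bounded. -/
def QuasiGreedy (p : ℝ) (x : ℕ → ℕ → ℝ) (xs : ℕ → (ℕ → ℝ) → ℝ) : Prop :=
  ∃ C ≥ (1 : ℝ), ∀ f, MemLpSeq p f → ∀ A : Finset ℕ,
    GreedySet (fun n => xs n f) A →
    pNorm p (fun j => ∑ n ∈ A, xs n f * x n j) ≤ C * pNorm p f

namespace QGD

/-- `p`-th power of the `p`-norm. -/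
noncomputable def Q (p : ℝ) (f : ℕ → ℝ) : ℝ := ∑' j, |f j| ^ p

/-- Finite linear combination. -/
noncomputable def L (x : ℕ → ℕ → ℝ) (A : Finset ℕ) (c : ℕ → ℝ) : ℕ → ℝ :=
  fun j => ∑ n ∈ A, c n * x n j

lemma abs_add_rpow {p : ℝ} (hp0 : 0 < p) (hp1 : p < 1) (a b : ℝ) :
    |a + b| ^ p ≤ |a| ^ p + |b| ^ p :=
  (Real.rpow_le_rpow (abs_nonneg _) (abs_add_le a b) hp0.le).trans
    (Real.rpow_add_le_add_rpow (abs_nonneg _) (abs_nonneg _) hp0.le hp1.le)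

lemma Q_nonneg (p : ℝ) (f : ℕ → ℝ) : 0 ≤ Q p f := tsum_nonneg fun j => by positivity

lemma sum_le_Q {p : ℝ} {f : ℕ → ℝ} (hf : MemLpSeq p f) (J : Finset ℕ) :
    ∑ j ∈ J, |f j| ^ p ≤ Q p f :=
  Summable.sum_le_tsum J (fun i _ => by positivity) hf

lemma le_Q {p : ℝ} {f : ℕ → ℝ} (hf : MemLpSeq p f) (j : ℕ) : |f j| ^ p ≤ Q p f := by
  simpa using sum_le_Q hf {j}

lemma mem_add {p : ℝ} (hp0 : 0 < p) (hp1 : p < 1) {f g : ℕ → ℝ}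
    (hf : MemLpSeq p f) (hg : MemLpSeq p g) : MemLpSeq p (f + g) :=
  Summable.of_nonneg_of_le (fun j => by positivity) (fun j => abs_add_rpow hp0 hp1 (f j) (g j))
    (Summable.add hf hg)

lemma Q_add {p : ℝ} (hp0 : 0 < p) (hp1 : p < 1) {f g : ℕ → ℝ}
    (hf : MemLpSeq p f) (hg : MemLpSeq p g) : Q p (f + g) ≤ Q p f + Q p g := by
  unfold Q
  rw [← Summable.tsum_add hf hg]
  exact Summable.tsum_le_tsum (fun j => abs_add_rpow hp0 hp1 (f j) (g j))
    (mem_add hp0 hp1 hf hg) (Summable.add hf hg)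

lemma mem_smul {p : ℝ} {f : ℕ → ℝ} (c : ℝ)
    (hf : MemLpSeq p f) : MemLpSeq p (fun j => c * f j) := by
  unfold MemLpSeq
  simp_rw [abs_mul, Real.mul_rpow (abs_nonneg _) (abs_nonneg _)]
  exact Summable.mul_left _ hf

lemma Q_smul {p : ℝ} {f : ℕ → ℝ} (c : ℝ) : Q p (fun j => c * f j) = |c| ^ p * Q p f := by
  unfold Q
  simp_rw [abs_mul, Real.mul_rpow (abs_nonneg _) (abs_nonneg _)]
  exact tsum_mul_left

lemma mem_zero {p : ℝ} (hp0 : 0 < p) : MemLpSeq p (fun _ => 0) := by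
  unfold MemLpSeq
  simp only [abs_zero, Real.zero_rpow hp0.ne']
  exact summable_zero

lemma Q_zero {p : ℝ} (hp0 : 0 < p) : Q p (fun _ => 0) = 0 := by
  unfold Q
  simp [abs_zero, Real.zero_rpow hp0.ne']

lemma L_empty (x : ℕ → ℕ → ℝ) (c : ℕ → ℝ) : L x ∅ c = fun _ => 0 := by
  funext j; simp [L]

lemma L_insert (x : ℕ → ℕ → ℝ) (c : ℕ → ℝ) {A : Finset ℕ} {n : ℕ} (h : n ∉ A) :
    L x (insert n A) c = (fun j => c n * x n j) + L x A c := by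
  funext j; simp [L, Finset.sum_insert h]

lemma L_mem {p : ℝ} (hp0 : 0 < p) (hp1 : p < 1) {x : ℕ → ℕ → ℝ} (hx : ∀ n, MemLpSeq p (x n))
    (A : Finset ℕ) (c : ℕ → ℝ) : MemLpSeq p (L x A c) := by
  induction A using Finset.induction_on with
  | empty => rw [L_empty]; exact mem_zero hp0
  | insert n A h ih => rw [L_insert x c h]; exact mem_add hp0 hp1 (mem_smul _ (hx n)) ih

lemma Q_L_le {p : ℝ} (hp0 : 0 < p) (hp1 : p < 1) {x : ℕ → ℕ → ℝ} (hx : ∀ n, MemLpSeq p (x n))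
    (A : Finset ℕ) (c : ℕ → ℝ) : Q p (L x A c) ≤ ∑ n ∈ A, |c n| ^ p * Q p (x n) := by
  induction A using Finset.induction_on with
  | empty => rw [L_empty, Q_zero hp0]; simp
  | insert n A h ih =>
    rw [L_insert x c h, Finset.sum_insert h, ← Q_smul]
    exact (Q_add hp0 hp1 (mem_smul _ (hx n)) (L_mem hp0 hp1 hx A c)).trans (by gcongr)

lemma L_smul (x : ℕ → ℕ → ℝ) (A : Finset ℕ) (c : ℕ → ℝ) (t : ℝ) :
    L x A (fun n => t * c n) = fun j => t * L x A c j := by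
  funext j; simp [L, Finset.mul_sum, mul_assoc]

lemma L_add (x : ℕ → ℕ → ℝ) (A : Finset ℕ) (c d : ℕ → ℝ) :
    L x A (fun n => c n + d n) = L x A c + L x A d := by
  funext j; simp [L, add_mul, Finset.sum_add_distrib]

lemma L_congr (x : ℕ → ℕ → ℝ) {A : Finset ℕ} {c d : ℕ → ℝ} (h : ∀ n ∈ A, c n = d n) :
    L x A c = L x A d := by
  funext j; exact Finset.sum_congr rfl fun n hn => by rw [h n hn]

/-! ### Rademacher averages -/

/-- sign attached to a subset -/
noncomputable def sg (T : Finset ℕ) (n : ℕ) : ℝ := if n ∈ T then 1 else -1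

lemma abs_sg (T : Finset ℕ) (n : ℕ) : |sg T n| = 1 := by unfold sg; split_ifs <;> simp

lemma rad_step {A : Finset ℕ} {n : ℕ} (h : n ∉ A) (a : ℕ → ℝ) (F : ℝ → ℝ) :
    ∑ T ∈ (insert n A).powerset, F (∑ k ∈ insert n A, sg T k * a k) =
      ∑ T ∈ A.powerset, (F (∑ k ∈ A, sg T k * a k - a n) + F (∑ k ∈ A, sg T k * a k + a n)) := by
  rw [Finset.sum_powerset_insert h, ← Finset.sum_add_distrib]
  refine Finset.sum_congr rfl fun T hT => ?_
  have hT' := Finset.mem_powerset.1 hT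
  have hn : n ∉ T := fun hh => h (hT' hh)
  rw [Finset.sum_insert h, Finset.sum_insert h]
  have e : ∑ k ∈ A, sg (insert n T) k * a k = ∑ k ∈ A, sg T k * a k := by
    refine Finset.sum_congr rfl fun k hk => ?_
    have : k ≠ n := fun hh => h (hh ▸ hk)
    simp [sg, Finset.mem_insert, this]
  rw [e]
  have e1 : sg T n = -1 := by simp [sg, hn]
  have e2 : sg (insert n T) n = 1 := by simp [sg]
  rw [e1, e2]
  congr 2 <;> ring

lemma rad2 (A : Finset ℕ) (a : ℕ → ℝ) :
    ∑ T ∈ A.powerset, (∑ k ∈ A, sg T k * a k) ^ 2 = 2 ^ A.card * ∑ k ∈ A, a k ^ 2 := by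
  induction A using Finset.induction_on with
  | empty => simp
  | insert n A h ih =>
    rw [rad_step h a (fun s => s ^ 2), Finset.sum_insert h, Finset.card_insert_of_notMem h]
    have : ∀ s : ℝ, (s - a n) ^ 2 + (s + a n) ^ 2 = 2 * s ^ 2 + 2 * a n ^ 2 := fun s => by ring
    simp only [this]
    rw [Finset.sum_add_distrib, ← Finset.mul_sum, ih, Finset.sum_const, Finset.card_powerset]
    simp only [nsmul_eq_mul]; push_cast; ring

lemma rad4 (A : Finset ℕ) (a : ℕ → ℝ) :
    ∑ T ∈ A.powerset, (∑ k ∈ A, sg T k * a k) ^ 4 ≤ 3 * 2 ^ A.card * (∑ k ∈ A, a k ^ 2) ^ 2 := by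
  induction A using Finset.induction_on with
  | empty => simp
  | insert n A h ih =>
    rw [rad_step h a (fun s => s ^ 4), Finset.sum_insert h, Finset.card_insert_of_notMem h]
    have : ∀ s : ℝ, (s - a n) ^ 4 + (s + a n) ^ 4 = 2 * s ^ 4 + 12 * a n ^ 2 * s ^ 2 + 2 * a n ^ 4 :=
      fun s => by ring
    simp only [this]
    rw [Finset.sum_add_distrib, Finset.sum_add_distrib, ← Finset.mul_sum, ← Finset.mul_sum, rad2,
      Finset.sum_const, Finset.card_powerset]
    simp only [nsmul_eq_mul]; push_cast
    set σ := ∑ k ∈ A, a k ^ 2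
    have h2 : (0:ℝ) ≤ 2 ^ A.card * a n ^ 4 := by positivity
    rw [pow_succ (2:ℝ)]
    nlinarith [ih, h2]

lemma ptwise {p : ℝ} (hp0 : 0 < p) (hp1 : p < 1) {u : ℝ} (hu : 0 ≤ u) :
    u ^ 2 - u ^ 4 / 4 ≤ u ^ p := by
  rcases le_total u 1 with h | h
  · rcases hu.eq_or_lt with rfl | h0
    · simp [Real.zero_rpow hp0.ne']
    have : u ^ (2:ℝ) ≤ u ^ p := Real.rpow_le_rpow_of_exponent_ge h0 h (by linarith)
    rw [Real.rpow_two] at this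
    have : 0 ≤ u ^ 4 := by positivity
    linarith
  · have : 1 ≤ u ^ p := Real.one_le_rpow h hp0.le
    nlinarith [sq_nonneg (u ^ 2 / 2 - 1)]

/-- lower Khintchine inequality -/
lemma khin {p : ℝ} (hp0 : 0 < p) (hp1 : p < 1) (A : Finset ℕ) (a : ℕ → ℝ) :
    2 ^ A.card * (√(∑ k ∈ A, a k ^ 2)) ^ p ≤
      4 * ∑ T ∈ A.powerset, |∑ k ∈ A, sg T k * a k| ^ p := by
  have hσ : 0 ≤ ∑ k ∈ A, a k ^ 2 := Finset.sum_nonneg fun k _ => sq_nonneg _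
  set s := √(∑ k ∈ A, a k ^ 2) with hs
  have hs2 : s ^ 2 = ∑ k ∈ A, a k ^ 2 := Real.sq_sqrt hσ
  rcases (Real.sqrt_nonneg (∑ k ∈ A, a k ^ 2)).eq_or_lt with h0 | h0
  · rw [← hs] at h0
    rw [← h0, Real.zero_rpow hp0.ne', mul_zero]
    exact mul_nonneg (by norm_num) (Finset.sum_nonneg fun _ _ => by positivity)
  rw [← hs] at h0
  have key : ∀ T ∈ A.powerset, s ^ p * ((∑ k ∈ A, sg T k * a k) ^ 2 / s ^ 2 -
      (∑ k ∈ A, sg T k * a k) ^ 4 / s ^ 4 / 4) ≤ |∑ k ∈ A, sg T k * a k| ^ p := by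
    intro T _
    set w := ∑ k ∈ A, sg T k * a k
    have := ptwise hp0 hp1 (u := |w| / s) (by positivity)
    rw [Real.div_rpow (abs_nonneg _) h0.le, le_div_iff₀ (by positivity), div_pow, div_pow, sq_abs,
      show |w| ^ 4 = w ^ 4 from by rw [← abs_pow, abs_of_nonneg (by positivity)]] at this
    linarith
  have h1 := Finset.sum_le_sum key
  rw [← Finset.mul_sum, Finset.sum_sub_distrib, ← Finset.sum_div, ← Finset.sum_div,
    ← Finset.sum_div, rad2, ← hs2] at h1
  have h4 := rad4 A a
  rw [← hs2] at h4
  have h5 : (∑ T ∈ A.powerset, (∑ k ∈ A, sg T k * a k) ^ 4) / s ^ 4 ≤ 3 * 2 ^ A.card := by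
    rw [div_le_iff₀ (by positivity)]
    linarith [h4, show (s ^ 2) ^ 2 = s ^ 4 by ring]
  rw [mul_div_assoc, div_self (by positivity), mul_one] at h1
  have h6 : s ^ p * (2 ^ A.card / 4) ≤ ∑ T ∈ A.powerset, |∑ k ∈ A, sg T k * a k| ^ p := by
    refine le_trans ?_ h1
    gcongr
    linarith
  linarith

structure QB (p : ℝ) (x : ℕ → ℕ → ℝ) (xs : ℕ → (ℕ → ℝ) → ℝ) (Cq B a U : ℝ) : Prop where
  hp0 : 0 < p
  hp1 : p < 1
  mem : ∀ n, MemLpSeq p (x n)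
  hC : 1 ≤ Cq
  hB : 1 ≤ B
  ha : 0 < a
  map_add : ∀ n f g, MemLpSeq p f → MemLpSeq p g → xs n (f + g) = xs n f + xs n g
  map_smul : ∀ n (c : ℝ) (f : ℕ → ℝ), MemLpSeq p f → xs n (fun j => c * f j) = c * xs n f
  bdd : ∀ n f, MemLpSeq p f → |xs n f| ^ p ≤ B * Q p f
  biorth : ∀ m n, xs m (x n) = if m = n then (1 : ℝ) else 0
  dense : ∀ f, MemLpSeq p f → ∀ ε > 0, ∃ (A : Finset ℕ) (c : ℕ → ℝ),
    Q p (fun j => f j - L x A c j) < ε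
  lb : ∀ n, a ≤ Q p (x n)
  ub : ∀ n, Q p (x n) ≤ U
  qg : ∀ f, MemLpSeq p f → ∀ A : Finset ℕ, GreedySet (fun n => xs n f) A →
    Q p (L x A (fun n => xs n f)) ≤ Cq * Q p f

variable {p : ℝ} {x : ℕ → ℕ → ℝ} {xs : ℕ → (ℕ → ℝ) → ℝ} {Cq B a U : ℝ}

lemma QB.Lmem (H : QB p x xs Cq B a U) (A : Finset ℕ) (c : ℕ → ℝ) : MemLpSeq p (L x A c) :=
  L_mem H.hp0 H.hp1 H.mem A c

lemma QB.xs_zero (H : QB p x xs Cq B a U) (n : ℕ) : xs n (fun _ => 0) = 0 := by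
  have := H.map_smul n 0 (fun _ => 0) (mem_zero H.hp0)
  simpa using this

lemma QB.xs_L (H : QB p x xs Cq B a U) (A : Finset ℕ) (c : ℕ → ℝ) (n : ℕ) :
    xs n (L x A c) = if n ∈ A then c n else 0 := by
  induction A using Finset.induction_on with
  | empty => rw [L_empty, H.xs_zero]; simp
  | insert k A h ih =>
    rw [L_insert x c h, H.map_add n _ _ (mem_smul _ (H.mem k)) (H.Lmem A c), ih,
      H.map_smul n _ _ (H.mem k), H.biorth]
    by_cases hk : n = k
    · subst hk; simp [h]
    · simp [hk]

lemma QB.subset (H : QB p x xs Cq B a U) {A D : Finset ℕ} (hD : D ⊆ A) (e : ℕ → ℝ)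
    (he : ∀ n ∈ A, |e n| = 1) : Q p (L x D e) ≤ Cq * Q p (L x A e) := by
  have := H.qg (L x A e) (H.Lmem A e) D (by
    intro n hn k _
    simp only [H.xs_L]
    rw [if_pos (hD hn), he n (hD hn)]
    split_ifs with hk
    · exact (he k hk).le
    · simp)
  rwa [L_congr x (d := e) (fun n hn => by rw [H.xs_L, if_pos (hD hn)])] at this

lemma L_split (x : ℕ → ℕ → ℝ) (A : Finset ℕ) (P : ℕ → Prop) [DecidablePred P] (c : ℕ → ℝ) :
    L x A c = L x (A.filter P) c + L x (A.filter fun n => ¬ P n) c := by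
  funext j
  exact (Finset.sum_filter_add_sum_filter_not A P _).symm

lemma L_neg (x : ℕ → ℕ → ℝ) (A : Finset ℕ) (c : ℕ → ℝ) :
    Q p (L x A (fun n => - c n)) = Q p (L x A c) := by
  unfold Q L
  simp

lemma QB.signs (H : QB p x xs Cq B a U) (A : Finset ℕ) (e d : ℕ → ℝ)
    (he : ∀ n ∈ A, |e n| = 1) (hd : ∀ n ∈ A, |d n| = 1) :
    Q p (L x A d) ≤ 2 * Cq * Q p (L x A e) := by
  classical
  rw [L_split x A (fun n => d n = e n) d]
  refine (Q_add H.hp0 H.hp1 (H.Lmem _ _) (H.Lmem _ _)).trans ?_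
  have h1 := H.subset (Finset.filter_subset (fun n => d n = e n) A) e he
  have h2 := H.subset (Finset.filter_subset (fun n => ¬ d n = e n) A) e he
  rw [L_congr x (A := A.filter (fun n => d n = e n)) (c := d) (d := e)
    (fun n hn => (Finset.mem_filter.1 hn).2)]
  rw [L_congr x (A := A.filter (fun n => ¬ d n = e n)) (c := d) (d := fun n => - e n)
    (fun n hn => by
      have := Finset.mem_filter.1 hn
      have h3 : |d n| = |e n| := (hd n this.1).trans (he n this.1).symm
      exact (abs_eq_abs.1 h3).resolve_left this.2), L_neg]
  linarith

/-- the multiplier constant -/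
noncomputable def Kc (p Cq : ℝ) : ℝ := 2 * Cq / (2 ^ p - 1)

lemma two_rpow_gt {p : ℝ} (hp0 : 0 < p) : (1:ℝ) < 2 ^ p := Real.one_lt_rpow (by norm_num) hp0

lemma QB.Kc_pos (H : QB p x xs Cq B a U) : 0 < Kc p Cq := by
  have := two_rpow_gt H.hp0
  have := H.hC
  unfold Kc
  apply div_pos <;> linarith

lemma QB.mult (H : QB p x xs Cq B a U) (A : Finset ℕ) (c : ℕ → ℝ) (hc : ∀ n ∈ A, |c n| ≤ 1) :
    Q p (L x A c) ≤ Kc p Cq * Q p (L x A fun _ => 1) := by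
  have h2 := two_rpow_gt H.hp0
  set T : Set ℝ := {y | ∃ d : ℕ → ℝ, (∀ n ∈ A, |d n| ≤ 1) ∧ y = Q p (L x A d)} with hT
  have hbd : BddAbove T := by
    refine ⟨∑ n ∈ A, U, ?_⟩
    rintro y ⟨d, hd, rfl⟩
    refine (Q_L_le H.hp0 H.hp1 H.mem A d).trans (Finset.sum_le_sum fun n hn => ?_)
    have : |d n| ^ p ≤ 1 := Real.rpow_le_one (abs_nonneg _) (hd n hn) H.hp0.le
    nlinarith [H.ub n, Q_nonneg p (x n)]
  have hmem : Q p (L x A c) ∈ T := ⟨c, hc, rfl⟩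
  set S := 2 * Cq * Q p (L x A fun _ => 1) with hS
  have hstep : sSup T ≤ (S + sSup T) / 2 ^ p := by
    refine csSup_le ⟨_, hmem⟩ ?_
    rintro y ⟨d, hd, rfl⟩
    set e : ℕ → ℝ := fun n => if 0 ≤ d n then 1 else -1 with he
    have he1 : ∀ n, |e n| = 1 := fun n => by simp only [he]; split_ifs <;> simp
    have hle : ∀ n ∈ A, |2 * d n - e n| ≤ 1 := fun n hn => by
      have := abs_le.1 (hd n hn)
      simp only [he]; split_ifs with h <;> rw [abs_le] <;> constructor <;> linarith
    have e1 : L x A d = fun j => (1/2:ℝ) * (L x A e + L x A (fun n => 2 * d n - e n)) j := by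
      rw [← L_add, ← L_smul]
      exact L_congr x fun n _ => by ring
    rw [e1, Q_smul]
    have e2 : |(1/2:ℝ)| ^ p = 1 / 2 ^ p := by
      rw [abs_of_pos (by norm_num), Real.div_rpow (by norm_num) (by norm_num), Real.one_rpow]
    rw [e2, one_div, inv_mul_eq_div]
    gcongr
    refine (Q_add H.hp0 H.hp1 (H.Lmem _ _) (H.Lmem _ _)).trans ?_
    refine add_le_add ?_ (le_csSup hbd ⟨_, hle, rfl⟩)
    exact H.signs A (fun _ => 1) e (fun _ _ => by simp) (fun n _ => he1 n)
  rw [le_div_iff₀ (by linarith)] at hstep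
  refine (le_csSup hbd hmem).trans ?_
  rw [Kc, div_mul_eq_mul_div, le_div_iff₀ (by linarith)]
  linarith

lemma QB.finite (H : QB p x xs Cq B a U) {f : ℕ → ℝ} (hf : MemLpSeq p f) {t : ℝ} (ht : 0 < t) :
    {n | t < |xs n f|}.Finite := by
  have hB := H.hB
  have htp : 0 < t ^ p := Real.rpow_pos_of_pos ht p
  obtain ⟨A, c, hA⟩ := H.dense f hf (t ^ p / B) (by positivity)
  refine A.finite_toSet.subset fun n hn => ?_
  by_contra hnA
  have hnA : n ∉ A := hnA
  have e : f = (fun j => f j - L x A c j) + L x A c := by funext j; simp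
  have hm : MemLpSeq p (fun j => f j - L x A c j) := by
    have := mem_add H.hp0 H.hp1 hf (mem_smul (-1) (H.Lmem A c))
    convert this using 1
    funext j; simp; ring
  have h1 : xs n f = xs n (fun j => f j - L x A c j) := by
    conv_lhs => rw [e]
    rw [H.map_add n _ _ hm (H.Lmem A c), H.xs_L, if_neg hnA, add_zero]
  have h2 := H.bdd n _ hm
  rw [← h1] at h2
  have h3 : t ^ p ≤ |xs n f| ^ p := Real.rpow_le_rpow ht.le (le_of_lt hn) H.hp0.le
  rw [lt_div_iff₀ (by linarith)] at hA
  linarith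

lemma QB.level (H : QB p x xs Cq B a U) {f : ℕ → ℝ} (hf : MemLpSeq p f) {s t : ℝ} (ht : 0 < t)
    (hst : t ≤ s) (G : Finset ℕ) (hG : ∀ n, n ∈ G ↔ t < |xs n f| ∧ |xs n f| ≤ s) :
    Q p (L x G fun n => xs n f) ≤ 2 * Cq * Q p f := by
  classical
  have f1 := H.finite hf ht
  have f2 := H.finite hf (ht.trans_le hst)
  have gr : ∀ {u : ℝ} (F : {n | u < |xs n f|}.Finite), GreedySet (fun n => xs n f) F.toFinset := by
    intro u F n hn k hk
    simp only [Set.Finite.mem_toFinset, Set.mem_ofPred_eq] at hn hk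
    push Not at hk
    exact hk.trans hn.le
  have g1 := H.qg f hf _ (gr f1)
  have g2 := H.qg f hf _ (gr f2)
  have hGe : G = f1.toFinset \ f2.toFinset := by
    ext n; simp [hG]
  have hsub : f2.toFinset ⊆ f1.toFinset := by
    intro n hn
    simp only [Set.Finite.mem_toFinset, Set.mem_ofPred_eq] at hn ⊢
    exact hst.trans_lt hn
  have e : L x G (fun n => xs n f) = L x f1.toFinset (fun n => xs n f) +
      L x f2.toFinset (fun n => - xs n f) := by
    funext j
    have := Finset.sum_sdiff hsub (f := fun n => xs n f * x n j)
    simp only [L, hGe, Pi.add_apply, neg_mul, Finset.sum_neg_distrib]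
    linarith
  rw [e]
  refine (Q_add H.hp0 H.hp1 (H.Lmem _ _) (H.Lmem _ _)).trans ?_
  rw [L_neg]
  linarith

lemma QB.thin (H : QB p x xs Cq B a U) : ∃ r > 1, ∀ f, MemLpSeq p f → ∀ t > 0, ∀ G : Finset ℕ,
    (∀ n, n ∈ G ↔ t < |xs n f| ∧ |xs n f| ≤ r * t) →
    t ^ p * Q p (L x G fun _ => 1) ≤ 8 * Cq ^ 2 * Q p f := by
  have hK := H.Kc_pos
  have hC := H.hC
  have hp0 := H.hp0
  set η : ℝ := (1 / (4 * Cq * Kc p Cq)) ^ (1 / p) with hη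
  have hη0 : 0 < η := by positivity
  have hηp : η ^ p = 1 / (4 * Cq * Kc p Cq) := by
    rw [hη, ← Real.rpow_mul (by positivity), one_div_mul_cancel hp0.ne', Real.rpow_one]
  refine ⟨1 + η, by linarith, fun f hf t ht G hG => ?_⟩
  have h1 := H.level hf ht (by nlinarith : t ≤ (1 + η) * t) G hG
  set e : ℕ → ℝ := fun n => if 0 ≤ xs n f then 1 else -1 with he
  have he1 : ∀ n, |e n| = 1 := fun n => by simp only [he]; split_ifs <;> simp
  have hle : ∀ n ∈ G, |(t * e n - xs n f) / (η * t)| ≤ 1 := fun n hn => by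
    obtain ⟨ha, hb⟩ := (hG n).1 hn
    rw [abs_div, abs_of_pos (by positivity : 0 < η * t), div_le_one (by positivity)]
    simp only [he]
    split_ifs with h
    · rw [abs_of_nonneg h] at ha hb
      rw [abs_le]; constructor <;> nlinarith
    · push Not at h
      rw [abs_of_neg h] at ha hb
      rw [abs_le]; constructor <;> nlinarith
  have h2 := H.mult G _ hle
  have h3 := H.signs G e (fun _ => 1) (fun n _ => he1 n) (fun _ _ => by simp)
  have e1 : (fun j => t * L x G e j) = L x G (fun n => xs n f) +
      fun j => (η * t) * L x G (fun n => (t * e n - xs n f) / (η * t)) j := by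
    rw [← L_smul, ← L_smul, ← L_add]
    refine L_congr x fun n _ => ?_
    field_simp
    ring
  have h4 : t ^ p * Q p (L x G e) ≤ Q p (L x G fun n => xs n f) +
      (η * t) ^ p * Q p (L x G (fun n => (t * e n - xs n f) / (η * t))) := by
    have := Q_add H.hp0 H.hp1 (H.Lmem G fun n => xs n f)
      (mem_smul (η * t) (H.Lmem G (fun n => (t * e n - xs n f) / (η * t))))
    rw [← e1, Q_smul, Q_smul, abs_of_pos ht, abs_of_pos (by positivity : 0 < η * t)] at this
    exact this
  rw [Real.mul_rpow hη0.le ht.le, hηp] at h4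
  have htp : 0 < t ^ p := Real.rpow_pos_of_pos ht p
  set X := Q p (L x G fun _ => 1)
  set E := Q p (L x G e)
  have h5 : 1 / (4 * Cq * Kc p Cq) * t ^ p * Q p (L x G (fun n => (t * e n - xs n f) / (η * t)))
      ≤ t ^ p * X / (4 * Cq) := by
    calc _ ≤ 1 / (4 * Cq * Kc p Cq) * t ^ p * (Kc p Cq * X) := by gcongr
      _ = _ := by field_simp
  have h6 : t ^ p * E ≤ 2 * Cq * Q p f + t ^ p * X / (4 * Cq) := by linarith
  have h7 : t ^ p * X ≤ 2 * Cq * (t ^ p * E) := by nlinarith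
  have h8 : 2 * Cq * (t ^ p * E) ≤ 2 * Cq * (2 * Cq * Q p f + t ^ p * X / (4 * Cq)) := by gcongr
  have h9 : 2 * Cq * (2 * Cq * Q p f + t ^ p * X / (4 * Cq)) = 4 * Cq ^ 2 * Q p f + t ^ p * X / 2 := by
    field_simp; ring
  linarith

/-- lower democracy estimate with exponent `β` for the `p`-th power of the norm -/
def PP (p : ℝ) (x : ℕ → ℕ → ℝ) (β : ℝ) : Prop :=
  ∃ c > 0, ∀ A : Finset ℕ, c * (A.card : ℝ) ^ β ≤ Q p (L x A fun _ => 1)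

/-- unit vectors -/
noncomputable def E (j : ℕ) : ℕ → ℝ := Pi.single j 1

lemma E_mem {p : ℝ} (hp0 : 0 < p) (j : ℕ) : MemLpSeq p (E j) := by
  refine summable_of_ne_finset_zero (s := {j}) fun i hi => ?_
  have : i ≠ j := by simpa using hi
  simp [E, this, Real.zero_rpow hp0.ne']

lemma Q_E {p : ℝ} (hp0 : 0 < p) (j : ℕ) : Q p (E j) = 1 := by
  unfold Q
  rw [tsum_eq_single j (fun i hi => by simp [E, hi, Real.zero_rpow hp0.ne'])]
  simp [E]

lemma alg_id (M b w y : ℝ) (hw : w ≠ 0) (i : ℕ) :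
    M / w ^ (i + 1) * (b * y ^ i) = M * b / w * (y / w) ^ i := by
  rw [div_pow, pow_succ]; field_simp

set_option maxHeartbeats 1000000 in
lemma QB.ellq (H : QB p x xs Cq B a U) {β q : ℝ} (hβ : 0 < β) (hP : PP p x β)
    (hq : p / β < q) : ∃ K > 0, ∀ (j : ℕ) (A : Finset ℕ), ∑ n ∈ A, |xs n (E j)| ^ q ≤ K := by
  classical
  obtain ⟨r, hr, hthin⟩ := H.thin
  obtain ⟨c, hc, hP⟩ := hP
  have hp0 := H.hp0
  have hB := H.hB
  have hC := H.hC
  have hq0 : 0 < q := lt_trans (by positivity) hq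
  set b : ℝ := B ^ (1 / p) with hb
  have hb0 : 0 < b := by positivity
  set y : ℝ := 1 / r with hy
  have hy0 : 0 < y := by positivity
  have hy1 : y < 1 := by rw [hy, div_lt_one (by linarith)]; exact hr
  have hry : r * y = 1 := by rw [hy]; field_simp
  set M : ℝ := 8 * Cq ^ 2 / (c * b ^ p) with hM
  have hM0 : 0 < M := by positivity
  set z : ℝ := y ^ p with hz
  have hz0 : 0 < z := by positivity
  set w : ℝ := z ^ (1 / β) with hw
  have hw0 : 0 < w := by positivity
  set ρ : ℝ := y ^ q / w with hρ
  have hρ0 : 0 < ρ := by positivity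
  have hρ1 : ρ < 1 := by
    rw [hρ, div_lt_one hw0, hw, hz, ← Real.rpow_mul hy0.le]
    apply Real.rpow_lt_rpow_of_exponent_gt hy0 hy1
    rw [mul_one_div]; exact hq
  set D : ℝ := M ^ (1 / β) * b ^ q / w with hD
  have hD0 : 0 < D := by positivity
  refine ⟨D * (1 - ρ)⁻¹, mul_pos hD0 (inv_pos.2 (by linarith)), fun j A => ?_⟩
  have hbd : ∀ n, |xs n (E j)| ≤ b := fun n => by
    have := H.bdd n _ (E_mem hp0 j)
    rw [Q_E hp0, mul_one] at this
    rw [hb]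
    have h2 := Real.rpow_le_rpow (by positivity) this (by positivity : 0 ≤ 1 / p)
    rwa [← Real.rpow_mul (abs_nonneg _), mul_one_div_cancel hp0.ne', Real.rpow_one] at h2
  have hlev : ∀ n, ∃ i : ℕ, xs n (E j) ≠ 0 →
      b * y ^ (i + 1) < |xs n (E j)| ∧ |xs n (E j)| ≤ b * y ^ i := by
    intro n
    by_cases h0 : xs n (E j) = 0
    · exact ⟨0, fun h => (h h0).elim⟩
    have h1 : 0 < |xs n (E j)| := abs_pos.2 h0
    obtain ⟨i, hi1, hi2⟩ := exists_nat_pow_near_of_lt_one (x := |xs n (E j)| / b) (by positivity)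
      (by rw [div_le_one hb0]; exact hbd n) hy0 hy1
    rw [lt_div_iff₀ hb0] at hi1
    rw [div_le_iff₀ hb0] at hi2
    exact ⟨i, fun _ => ⟨by linarith, by linarith⟩⟩
  choose lev hlev using hlev
  have hG : ∀ (i : ℕ) (S : Finset ℕ), (∀ n ∈ S, b * y ^ (i + 1) < |xs n (E j)| ∧
      |xs n (E j)| ≤ b * y ^ i) → ∑ n ∈ S, |xs n (E j)| ^ q ≤ D * ρ ^ i := by
    intro i S hS
    have ht : 0 < b * y ^ (i + 1) := by positivity
    have hrt : r * (b * y ^ (i + 1)) = b * y ^ i := by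
      rw [pow_succ]; linear_combination (b * y ^ i) * hry
    have hfin := H.finite (E_mem hp0 j) ht
    set G := hfin.toFinset.filter (fun n => |xs n (E j)| ≤ b * y ^ i) with hGd
    have h1 := hthin (E j) (E_mem hp0 j) _ ht G (fun n => by rw [hrt]; simp [hGd])
    rw [Q_E hp0, mul_one] at h1
    have hSG : S ⊆ G := fun n hn => by
      have := hS n hn
      simp [hGd, this.1, this.2]
    have hcard : (S.card : ℝ) ≤ G.card := by exact_mod_cast Finset.card_le_card hSG
    have htp : (b * y ^ (i + 1)) ^ p = b ^ p * z ^ (i + 1) := by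
      rw [Real.mul_rpow hb0.le (by positivity), ← Real.rpow_pow_comm hy0.le]
    rw [htp] at h1
    have h2 : (G.card : ℝ) ^ β ≤ M / z ^ (i + 1) := by
      rw [hM, div_div, le_div_iff₀ (by positivity)]
      have h3 := mul_le_mul_of_nonneg_left (hP G) (by positivity : 0 ≤ b ^ p * z ^ (i + 1))
      linarith
    have h3 : (G.card : ℝ) ≤ M ^ (1 / β) / w ^ (i + 1) := by
      have h4 := Real.rpow_le_rpow (by positivity) h2 (by positivity : 0 ≤ 1 / β)
      rwa [← Real.rpow_mul (by positivity), mul_one_div_cancel hβ.ne', Real.rpow_one,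
        Real.div_rpow hM0.le (by positivity), ← Real.rpow_pow_comm hz0.le] at h4
    have h5 : ∀ n ∈ S, |xs n (E j)| ^ q ≤ b ^ q * (y ^ q) ^ i := fun n hn => by
      have := Real.rpow_le_rpow (abs_nonneg _) (hS n hn).2 hq0.le
      rwa [Real.mul_rpow hb0.le (by positivity), ← Real.rpow_pow_comm hy0.le] at this
    calc ∑ n ∈ S, |xs n (E j)| ^ q ≤ S.card * (b ^ q * (y ^ q) ^ i) := by
          have := Finset.sum_le_card_nsmul S _ _ h5
          rwa [nsmul_eq_mul] at this
      _ ≤ (M ^ (1 / β) / w ^ (i + 1)) * (b ^ q * (y ^ q) ^ i) := by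
          gcongr; exact hcard.trans h3
      _ = D * ρ ^ i := by
          exact alg_id _ _ _ _ hw0.ne' i
  set A' := A.filter (fun n => xs n (E j) ≠ 0) with hA'
  have e1 : ∑ n ∈ A, |xs n (E j)| ^ q = ∑ n ∈ A', |xs n (E j)| ^ q := by
    rw [hA', Finset.sum_filter_of_ne]
    intro n _ hne h0
    apply hne
    simp [h0, Real.zero_rpow hq0.ne']
  rw [e1, ← Finset.sum_fiberwise_of_maps_to (t := A'.image lev) (g := lev)
    (fun n hn => Finset.mem_image_of_mem _ hn)]
  calc _ ≤ ∑ i ∈ A'.image lev, D * ρ ^ i := by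
        refine Finset.sum_le_sum fun i _ => hG i _ fun n hn => ?_
        have h1 := Finset.mem_filter.1 hn
        have h2 := hlev n (Finset.mem_filter.1 h1.1).2
        rwa [h1.2] at h2
    _ = D * ∑ i ∈ A'.image lev, ρ ^ i := by rw [Finset.mul_sum]
    _ ≤ D * (1 - ρ)⁻¹ := by
        gcongr
        rw [← tsum_geometric_of_lt_one hρ0.le hρ1]
        exact Summable.sum_le_tsum _ (fun i _ => by positivity)
          (summable_geometric_of_lt_one hρ0.le hρ1)

lemma QB.square (H : QB p x xs Cq B a U) (A J : Finset ℕ) :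
    ∑ j ∈ J, (√(∑ n ∈ A, x n j ^ 2)) ^ p ≤ 8 * Cq * Q p (L x A fun _ => 1) := by
  have h1 : ∑ j ∈ J, 2 ^ A.card * (√(∑ n ∈ A, x n j ^ 2)) ^ p ≤
      ∑ j ∈ J, 4 * ∑ T ∈ A.powerset, |∑ k ∈ A, sg T k * x k j| ^ p :=
    Finset.sum_le_sum fun j _ => khin H.hp0 H.hp1 A (fun n => x n j)
  rw [← Finset.mul_sum, ← Finset.mul_sum, Finset.sum_comm] at h1
  have h2 : ∑ T ∈ A.powerset, ∑ j ∈ J, |∑ k ∈ A, sg T k * x k j| ^ p ≤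
      ∑ T ∈ A.powerset, 2 * Cq * Q p (L x A fun _ => 1) := by
    refine Finset.sum_le_sum fun T _ => ?_
    exact (sum_le_Q (H.Lmem A (sg T)) J).trans
      (H.signs A (fun _ => 1) (sg T) (fun _ _ => by simp) (fun n _ => abs_sg T n))
  rw [Finset.sum_const, Finset.card_powerset, nsmul_eq_mul] at h2
  push_cast at h2
  have h3 : (0:ℝ) < 2 ^ A.card := by positivity
  refine le_of_mul_le_mul_left ?_ h3
  linarith

lemma QB.xs_LE (H : QB p x xs Cq B a U) (J : Finset ℕ) (c : ℕ → ℝ) (n : ℕ) :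
    xs n (L E J c) = ∑ j ∈ J, c j * xs n (E j) := by
  induction J using Finset.induction_on with
  | empty => rw [L_empty, H.xs_zero]; simp
  | insert k J h ih =>
    rw [L_insert E c h, H.map_add n _ _ (mem_smul _ (E_mem H.hp0 k))
      (L_mem H.hp0 H.hp1 (E_mem H.hp0) J c), ih, H.map_smul n _ _ (E_mem H.hp0 k),
      Finset.sum_insert h]

/-- tail of a sequence -/
noncomputable def tl (f : ℕ → ℝ) (N : ℕ) : ℕ → ℝ := fun j => if j < N then 0 else f j

lemma tl_mem {p : ℝ} (hp0 : 0 < p) {f : ℕ → ℝ} (hf : MemLpSeq p f) (N : ℕ) :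
    MemLpSeq p (tl f N) := by
  refine Summable.of_nonneg_of_le (fun j => by positivity) (fun j => ?_) hf
  unfold tl
  split_ifs
  · rw [abs_zero, Real.zero_rpow hp0.ne']; positivity
  · exact le_rfl

lemma tl_Q {p : ℝ} (hp0 : 0 < p) {f : ℕ → ℝ} (hf : MemLpSeq p f) :
    Filter.Tendsto (fun N => Q p (tl f N)) Filter.atTop (nhds 0) := by
  refine (tendsto_sum_nat_add (fun j => |f j| ^ p)).congr fun N => ?_
  have h := Summable.sum_add_tsum_nat_add N (tl_mem hp0 hf N)
  have h0 : ∑ i ∈ Finset.range N, |tl f N i| ^ p = 0 :=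
    Finset.sum_eq_zero fun i hi => by
      simp [tl, Finset.mem_range.1 hi, Real.zero_rpow hp0.ne']
  rw [h0, zero_add] at h
  unfold Q
  rw [← h]
  refine tsum_congr fun i => ?_
  simp [tl]

lemma f_eq_tl (f : ℕ → ℝ) (N : ℕ) : f = L E (Finset.range N) f + tl f N := by
  funext j
  simp only [L, tl, Pi.add_apply, E, Pi.single_apply, mul_ite, mul_one, mul_zero]
  rw [Finset.sum_ite_eq]
  by_cases h : j < N <;> simp [h]

lemma QB.exists_N (H : QB p x xs Cq B a U) (A : Finset ℕ) : ∃ N : ℕ, ∀ n ∈ A,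
    1 / 2 ≤ ∑ j ∈ Finset.range N, |x n j| * |xs n (E j)| := by
  have hp0 := H.hp0
  have hB := H.hB
  have : ∀ᶠ N in Filter.atTop, ∀ n ∈ A, Q p (tl (x n) N) < (1/2) ^ p / B := by
    rw [Filter.eventually_all_finset]
    intro n _
    exact (tl_Q hp0 (H.mem n)).eventually_lt_const (by positivity)
  obtain ⟨N, hN⟩ := this.exists
  refine ⟨N, fun n hn => ?_⟩
  have h1 := hN n hn
  rw [lt_div_iff₀ (by linarith)] at h1
  have h2 := H.bdd n _ (tl_mem hp0 (H.mem n) N)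
  have h3 : |xs n (tl (x n) N)| ^ p < (1/2) ^ p := by linarith
  have h4 : |xs n (tl (x n) N)| < 1/2 :=
    (Real.rpow_lt_rpow_iff (abs_nonneg _) (by norm_num) hp0).1 h3
  have h5 : xs n (x n) = xs n (L E (Finset.range N) (x n)) + xs n (tl (x n) N) := by
    rw [← H.map_add n _ _ (L_mem hp0 H.hp1 (E_mem hp0) _ _) (tl_mem hp0 (H.mem n) N), ← f_eq_tl]
  rw [H.biorth, if_pos rfl, H.xs_LE] at h5
  have h6 : ∑ j ∈ Finset.range N, x n j * xs n (E j) ≤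
      ∑ j ∈ Finset.range N, |x n j| * |xs n (E j)| :=
    Finset.sum_le_sum fun j _ => by rw [← abs_mul]; exact le_abs_self _
  have := (abs_lt.1 h4).2
  linarith

lemma abs_le_sqrt_sum (A : Finset ℕ) (v : ℕ → ℝ) {n : ℕ} (hn : n ∈ A) :
    |v n| ≤ √(∑ k ∈ A, v k ^ 2) := by
  rw [← Real.sqrt_sq_eq_abs]
  exact Real.sqrt_le_sqrt (Finset.single_le_sum (f := fun k => v k ^ 2)
    (fun k _ => sq_nonneg _) hn)

lemma QB.step (H : QB p x xs Cq B a U) {q : ℝ} (hq : 1 ≤ q)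
    (hK : ∃ K > 0, ∀ (j : ℕ) (A : Finset ℕ), ∑ n ∈ A, |xs n (E j)| ^ q ≤ K) :
    PP p x (1 / q) := by
  obtain ⟨K, hK0, hK⟩ := hK
  have hp0 := H.hp0
  have hp1 := H.hp1
  have hC := H.hC
  have hU : 0 < U := H.ha.trans_le ((H.lb 0).trans (H.ub 0))
  set V : ℝ := U ^ ((1 - p) / p) with hV
  have hV0 : 0 < V := by positivity
  set W : ℝ := V * K ^ (1 / q) with hW
  have hW0 : 0 < W := by positivity
  refine ⟨1 / (16 * W * Cq), by positivity, fun A => ?_⟩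
  rcases A.eq_empty_or_nonempty with rfl | hA
  · rw [Finset.card_empty, Nat.cast_zero, Real.zero_rpow (by positivity), mul_zero]
    exact Q_nonneg _ _
  have hm : (0:ℝ) < A.card := by exact_mod_cast hA.card_pos
  set m : ℝ := (A.card : ℝ) with hmd
  obtain ⟨N, hN⟩ := H.exists_N A
  have hx : ∀ n j, |x n j| ≤ V * |x n j| ^ p := fun n j => by
    rcases (abs_nonneg (x n j)).eq_or_lt with h0 | h0
    · rw [← h0, Real.zero_rpow hp0.ne', mul_zero]
    have h1 : |x n j| ^ p ≤ U := (le_Q (H.mem n) j).trans (H.ub n)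
    have h2 := Real.rpow_le_rpow (by positivity) h1
      (div_nonneg (by linarith) hp0.le : 0 ≤ (1 - p) / p)
    rw [← Real.rpow_mul (abs_nonneg _), mul_div_cancel₀ _ hp0.ne', ← hV] at h2
    calc |x n j| = |x n j| ^ (1 - p) * |x n j| ^ p := by
          rw [← Real.rpow_add h0, sub_add_cancel, Real.rpow_one]
      _ ≤ _ := by gcongr
  have hsum : ∀ j, ∑ n ∈ A, |xs n (E j)| ≤ m ^ (1 - 1 / q) * K ^ (1 / q) := fun j => by
    have h1 := Real.rpow_sum_le_const_mul_sum_rpow A (fun n => xs n (E j)) hq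
    have h2 : (∑ n ∈ A, |xs n (E j)|) ^ q ≤ m ^ (q - 1) * K := h1.trans (by gcongr; exact hK j A)
    have h3 := Real.rpow_le_rpow (by positivity) h2 (by positivity : 0 ≤ 1 / q)
    rw [← Real.rpow_mul (Finset.sum_nonneg fun _ _ => abs_nonneg _),
      mul_one_div_cancel (by positivity), Real.rpow_one,
      Real.mul_rpow (by positivity) hK0.le, ← Real.rpow_mul hm.le] at h3
    rwa [show (q - 1) * (1 / q) = 1 - 1 / q by field_simp] at h3
  have h1 : m * (1 / 2) ≤ ∑ n ∈ A, ∑ j ∈ Finset.range N, |x n j| * |xs n (E j)| := by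
    have := Finset.card_nsmul_le_sum A _ _ hN
    rwa [nsmul_eq_mul] at this
  rw [Finset.sum_comm] at h1
  have h2 : ∀ j ∈ Finset.range N, ∑ n ∈ A, |x n j| * |xs n (E j)| ≤
      W * m ^ (1 - 1 / q) * (√(∑ n ∈ A, x n j ^ 2)) ^ p := by
    intro j _
    set s := (√(∑ n ∈ A, x n j ^ 2)) ^ p with hs
    have hs0 : 0 ≤ s := by positivity
    calc ∑ n ∈ A, |x n j| * |xs n (E j)| ≤ ∑ n ∈ A, (V * s) * |xs n (E j)| := by
          refine Finset.sum_le_sum fun n hn => ?_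
          gcongr
          refine (hx n j).trans ?_
          gcongr
          exact Real.rpow_le_rpow (abs_nonneg _) (abs_le_sqrt_sum A (fun n => x n j) hn) hp0.le
      _ = (V * s) * ∑ n ∈ A, |xs n (E j)| := by rw [Finset.mul_sum]
      _ ≤ (V * s) * (m ^ (1 - 1 / q) * K ^ (1 / q)) := by gcongr; exact hsum j
      _ = _ := by rw [hW]; ring
  have h3 := h1.trans (Finset.sum_le_sum h2)
  rw [← Finset.mul_sum] at h3
  have h4 : m * (1 / 2) ≤ W * m ^ (1 - 1 / q) * (8 * Cq * Q p (L x A fun _ => 1)) :=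
    h3.trans (by gcongr; exact H.square A _)
  have h5 : m = m ^ (1 / q) * m ^ (1 - 1 / q) := by
    rw [← Real.rpow_add hm, add_sub_cancel, Real.rpow_one]
  have h6 : 0 < m ^ (1 - 1 / q) := by positivity
  have h7 : m ^ (1 / q) ≤ 16 * W * Cq * Q p (L x A fun _ => 1) := by
    refine le_of_mul_le_mul_right ?_ h6
    rw [← h5]; linarith
  rw [one_div, inv_mul_le_iff₀ (by positivity)]
  exact h7

lemma QB.init (H : QB p x xs Cq B a U) : PP p x (p / 2) := by
  have hp0 := H.hp0
  have hp1 := H.hp1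
  have hC := H.hC
  have ha := H.ha
  refine ⟨a / (16 * Cq), by positivity, fun A => ?_⟩
  rcases A.eq_empty_or_nonempty with rfl | hA
  · rw [Finset.card_empty, Nat.cast_zero, Real.zero_rpow (by positivity), mul_zero]
    exact Q_nonneg _ _
  have hm : (0:ℝ) < A.card := by exact_mod_cast hA.card_pos
  set m : ℝ := (A.card : ℝ) with hmd
  have : ∀ᶠ N in Filter.atTop, ∀ n ∈ A, a / 2 < ∑ j ∈ Finset.range N, |x n j| ^ p := by
    rw [Filter.eventually_all_finset]
    intro n _
    refine (Summable.tendsto_sum_tsum_nat (H.mem n)).eventually_const_lt ?_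
    have := H.lb n
    unfold Q at this
    linarith
  obtain ⟨N, hN⟩ := this.exists
  have h1 : m * (a / 2) ≤ ∑ n ∈ A, ∑ j ∈ Finset.range N, |x n j| ^ p := by
    have := Finset.card_nsmul_le_sum A _ _ (fun n hn => (hN n hn).le)
    rwa [nsmul_eq_mul] at this
  rw [Finset.sum_comm] at h1
  have h2 : ∀ j ∈ Finset.range N, ∑ n ∈ A, |x n j| ^ p ≤
      m ^ (1 - p / 2) * (√(∑ n ∈ A, x n j ^ 2)) ^ p := by
    intro j _
    have hq : 1 ≤ 2 / p := by rw [le_div_iff₀ hp0]; linarith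
    have h1 := Real.rpow_sum_le_const_mul_sum_rpow A (fun n => |x n j| ^ p) hq
    have e : ∀ n, |(|x n j| ^ p)| = |x n j| ^ p := fun n => abs_of_nonneg (by positivity)
    have e2 : ∀ n, (|x n j| ^ p) ^ (2 / p) = x n j ^ 2 := fun n => by
      rw [← Real.rpow_mul (abs_nonneg _), mul_div_cancel₀ _ hp0.ne', Real.rpow_two, sq_abs]
    simp only [e, e2] at h1
    have h3 := Real.rpow_le_rpow (by positivity) h1 (by positivity : 0 ≤ p / 2)
    rw [← Real.rpow_mul (Finset.sum_nonneg fun _ _ => by positivity),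
      show 2 / p * (p / 2) = 1 by field_simp, Real.rpow_one,
      Real.mul_rpow (by positivity) (Finset.sum_nonneg fun _ _ => by positivity),
      ← Real.rpow_mul hm.le, show (2 / p - 1) * (p / 2) = 1 - p / 2 by field_simp] at h3
    refine h3.trans (le_of_eq ?_)
    rw [Real.sqrt_eq_rpow, ← Real.rpow_mul (Finset.sum_nonneg fun _ _ => by positivity)]
    congr 2; ring
  have h3 := h1.trans (Finset.sum_le_sum h2)
  rw [← Finset.mul_sum] at h3
  have h4 : m * (a / 2) ≤ m ^ (1 - p / 2) * (8 * Cq * Q p (L x A fun _ => 1)) :=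
    h3.trans (by gcongr; exact H.square A _)
  have h5 : m = m ^ (p / 2) * m ^ (1 - p / 2) := by
    rw [← Real.rpow_add hm, add_sub_cancel, Real.rpow_one]
  have h6 : 0 < m ^ (1 - p / 2) := by positivity
  have h7 : m ^ (p / 2) * (a / 2) ≤ 8 * Cq * Q p (L x A fun _ => 1) := by
    refine le_of_mul_le_mul_right ?_ h6
    calc _ = m * (a / 2) := by nth_rewrite 3 [h5]; ring
      _ ≤ _ := by linarith
  rw [div_mul_eq_mul_div, div_le_iff₀ (by positivity)]
  linarith

lemma QB.final (H : QB p x xs Cq B a U) : PP p x 1 := by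
  have hp0 := H.hp0
  have hp1 := H.hp1
  have hs0 : 0 < √p := Real.sqrt_pos.2 hp0
  have hs1 : √p < 1 := by rw [Real.sqrt_lt' one_pos]; simpa using hp1
  have hss : √p * √p = p := Real.mul_self_sqrt hp0.le
  have fin : ∀ β, p < β → PP p x β → PP p x 1 := by
    intro β hβ hP
    have := H.step le_rfl (H.ellq (hp0.trans hβ) hP ((div_lt_one (hp0.trans hβ)).2 hβ))
    simpa using this
  by_contra hcon
  have all : ∀ k : ℕ, PP p x (p / 2 / √p ^ k) := by
    intro k
    induction k with
    | zero => simpa using H.init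
    | succ k ih =>
      set β := p / 2 / √p ^ k with hβ
      have hβ0 : 0 < β := by positivity
      have hle : β ≤ p := by
        by_contra h
        exact hcon (fin β (not_le.1 h) ih)
      have := H.step (q := √p / β) (by rw [le_div_iff₀ hβ0]; nlinarith)
        (H.ellq hβ0 ih (by gcongr; nlinarith))
      rw [one_div_div] at this
      rwa [pow_succ, ← div_div]
  obtain ⟨k, hk⟩ := exists_pow_lt_of_lt_one (by norm_num : (0:ℝ) < 1 / 2) hs1
  refine hcon (fin _ ?_ (all k))
  rw [lt_div_iff₀ (by positivity)]
  nlinarith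

lemma pNorm_eq (p : ℝ) (f : ℕ → ℝ) : pNorm p f = Q p f ^ (1 / p) := rfl

lemma pNorm_nonneg (p : ℝ) (f : ℕ → ℝ) : 0 ≤ pNorm p f := by
  rw [pNorm_eq]; exact Real.rpow_nonneg (Q_nonneg p f) _

lemma pNorm_rpow {p : ℝ} (hp0 : 0 < p) (f : ℕ → ℝ) : pNorm p f ^ p = Q p f := by
  rw [pNorm_eq, ← Real.rpow_mul (Q_nonneg p f), one_div_mul_cancel hp0.ne', Real.rpow_one]

end QGD

open QGD

/-- Quasi-greedy bases of `ℓ_p`, `0<p<1`, are democratic, with both democracy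
functions of the order of `m^(1/p)`. -/
theorem stmt0 (p : ℝ) (hp0 : 0 < p) (hp1 : p < 1)
    (x : ℕ → ℕ → ℝ) (xs : ℕ → (ℕ → ℝ) → ℝ)
    (hbasis : IsLpBasis p x xs) (hqg : QuasiGreedy p x xs) :
    ∃ c C : ℝ, 0 < c ∧ c ≤ C ∧
      (∀ m : ℕ, 1 ≤ m → ∀ A : Finset ℕ, m ≤ A.card →
        c * (m : ℝ) ^ (1 / p) ≤ pNorm p (fun j => ∑ n ∈ A, x n j)) ∧
      (∀ m : ℕ, 1 ≤ m → ∀ A : Finset ℕ, A.card ≤ m →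
        pNorm p (fun j => ∑ n ∈ A, x n j) ≤ C * (m : ℝ) ^ (1 / p)) ∧
      (∃ D ≥ (1 : ℝ), ∀ A B : Finset ℕ, A.card = B.card →
        pNorm p (fun j => ∑ n ∈ A, x n j) ≤ D * pNorm p (fun j => ∑ n ∈ B, x n j)) := by
  obtain ⟨C, hC1, hC⟩ := hqg
  obtain ⟨b, hb⟩ := hbasis.bdd
  obtain ⟨a, ha, hlb⟩ := hbasis.norm_lb
  obtain ⟨u, hu⟩ := hbasis.norm_ub
  have H : QB p x xs (C ^ p) ((max b 1) ^ p) (a ^ p) (u ^ p) :=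
    { hp0 := hp0
      hp1 := hp1
      mem := hbasis.mem
      hC := Real.one_le_rpow hC1 hp0.le
      hB := Real.one_le_rpow (le_max_right _ _) hp0.le
      ha := by positivity
      map_add := hbasis.map_add
      map_smul := hbasis.map_smul
      bdd := fun n f hf => by
        have h1 : |xs n f| ≤ max b 1 * pNorm p f :=
          (hb n f hf).trans (mul_le_mul_of_nonneg_right (le_max_left _ _) (pNorm_nonneg p f))
        have h2 := Real.rpow_le_rpow (abs_nonneg _) h1 hp0.le
        rwa [Real.mul_rpow (by positivity) (pNorm_nonneg p f), pNorm_rpow hp0] at h2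
      biorth := hbasis.biorth
      dense := fun f hf ε hε => by
        obtain ⟨A, c, h⟩ := hbasis.dense f hf (ε ^ (1 / p)) (by positivity)
        refine ⟨A, c, ?_⟩
        rw [pNorm_eq] at h
        exact (Real.rpow_lt_rpow_iff (Q_nonneg _ _) hε.le (by positivity)).1 h
      lb := fun n => by
        rw [← pNorm_rpow hp0]
        exact Real.rpow_le_rpow ha.le (hlb n) hp0.le
      ub := fun n => by
        rw [← pNorm_rpow hp0]
        exact Real.rpow_le_rpow (pNorm_nonneg _ _) (hu n) hp0.le
      qg := fun f hf A hA => by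
        have h2 := Real.rpow_le_rpow (pNorm_nonneg _ _) (hC f hf A hA) hp0.le
        rwa [Real.mul_rpow (by positivity) (pNorm_nonneg p f), pNorm_rpow hp0,
          pNorm_rpow hp0] at h2 }
  obtain ⟨c, hc, hP⟩ := H.final
  have hL : ∀ A : Finset ℕ, (fun j => ∑ n ∈ A, x n j) = L x A fun _ => 1 := fun A => by
    funext j; simp [L]
  simp only [hL]
  have hlow : ∀ m : ℕ, 1 ≤ m → ∀ A : Finset ℕ, m ≤ A.card →
      c ^ (1 / p) * (m : ℝ) ^ (1 / p) ≤ pNorm p (L x A fun _ => 1) := by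
    intro m _ A hA
    have h1 := hP A
    rw [Real.rpow_one] at h1
    have h2 : (m : ℝ) ≤ A.card := by exact_mod_cast hA
    rw [pNorm_eq, ← Real.mul_rpow hc.le (by positivity)]
    refine Real.rpow_le_rpow (by positivity) (le_trans ?_ h1) (by positivity)
    gcongr
  have hu0 : 0 < u := ha.trans_le ((hlb 0).trans (hu 0))
  have hup : ∀ m : ℕ, 1 ≤ m → ∀ A : Finset ℕ, A.card ≤ m →
      pNorm p (L x A fun _ => 1) ≤ u * (m : ℝ) ^ (1 / p) := by
    intro m _ A hA
    have h1 := Q_L_le hp0 hp1 hbasis.mem A fun _ => 1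
    have h2 : (A.card : ℝ) ≤ m := by exact_mod_cast hA
    have h3 : Q p (L x A fun _ => 1) ≤ u ^ p * m := by
      refine h1.trans ?_
      calc ∑ n ∈ A, |(1:ℝ)| ^ p * Q p (x n) ≤ ∑ n ∈ A, u ^ p := by
            refine Finset.sum_le_sum fun n _ => ?_
            rw [abs_one, Real.one_rpow, one_mul]
            exact H.ub n
        _ = u ^ p * A.card := by rw [Finset.sum_const, nsmul_eq_mul, mul_comm]
        _ ≤ _ := by gcongr
    have h4 := Real.rpow_le_rpow (Q_nonneg _ _) h3 (by positivity : 0 ≤ 1 / p)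
    rwa [Real.mul_rpow (by positivity) (by positivity), ← Real.rpow_mul hu0.le,
      mul_one_div_cancel hp0.ne', Real.rpow_one, ← pNorm_eq] at h4
  have hc' : 0 < c ^ (1 / p) := by positivity
  set c' := c ^ (1 / p) with hcd
  have hcu : c' ≤ u := by
    have h1 := hlow 1 le_rfl {0} (by simp)
    have h2 := hup 1 le_rfl {0} (by simp)
    simpa using h1.trans h2
  refine ⟨c', u, hc', hcu, hlow, hup, u / c', (one_le_div hc').2 hcu, fun A D hAD => ?_⟩
  rcases Nat.eq_zero_or_pos D.card with h0 | h0
  · rw [Finset.card_eq_zero.1 (hAD.trans h0), Finset.card_eq_zero.1 h0]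
    exact le_mul_of_one_le_left (pNorm_nonneg _ _) ((one_le_div hc').2 hcu)
  · have h1 := hlow D.card h0 D le_rfl
    have h2 := hup D.card h0 A hAD.le
    rw [div_mul_eq_mul_div, le_div_iff₀ hc']
    calc _ ≤ u * (D.card : ℝ) ^ (1 / p) * c' := by gcongr
      _ = u * (c' * (D.card : ℝ) ^ (1 / p)) := by ring
      _ ≤ _ := by gcongr
end

section
/- Let 0<p<1, let (x_n)_{n∈ℕ} together with (x_n*)_{n∈ℕ} be a quasi-greedy basis of ℓ_p, and set q := (1−p+p²)/(p²−p³). Then there is a constant c>0 such that φ_l(m) ≥ c · m^{1/p} / (1+log m)^{q} for every m ≥ 1. -/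
open scoped BigOperators

noncomputable def NN (p : ℝ) (f : ℕ → ℝ) : ℝ := ∑' j, |f j| ^ p

lemma NN_nonneg (p : ℝ) (f : ℕ → ℝ) : 0 ≤ NN p f :=
  tsum_nonneg fun j => Real.rpow_nonneg (abs_nonneg _) _

lemma pNorm_rpow {p : ℝ} (hp0 : 0 < p) (f : ℕ → ℝ) : (pNorm p f) ^ p = NN p f := by
  unfold pNorm
  rw [← Real.rpow_mul (tsum_nonneg fun j => Real.rpow_nonneg (abs_nonneg _) _)]
  rw [one_div_mul_cancel hp0.ne', Real.rpow_one]; rfl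

lemma pNorm_nonneg (p : ℝ) (f : ℕ → ℝ) : 0 ≤ pNorm p f :=
  Real.rpow_nonneg (NN_nonneg p f) _

lemma abs_add_rpow {p : ℝ} (hp0 : 0 < p) (hp1 : p < 1) (a b : ℝ) :
    |a + b| ^ p ≤ |a| ^ p + |b| ^ p :=
  (Real.rpow_le_rpow (abs_nonneg _) (abs_add_le a b) hp0.le).trans
    (Real.rpow_add_le_add_rpow (abs_nonneg _) (abs_nonneg _) hp0.le hp1.le)

lemma mem_add {p : ℝ} (hp0 : 0 < p) (hp1 : p < 1) {f g : ℕ → ℝ}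
    (hf : MemLpSeq p f) (hg : MemLpSeq p g) : MemLpSeq p (f + g) :=
  Summable.of_nonneg_of_le (fun j => Real.rpow_nonneg (abs_nonneg _) _)
    (fun j => abs_add_rpow hp0 hp1 (f j) (g j)) (Summable.add hf hg)

lemma NN_add {p : ℝ} (hp0 : 0 < p) (hp1 : p < 1) {f g : ℕ → ℝ}
    (hf : MemLpSeq p f) (hg : MemLpSeq p g) : NN p (f + g) ≤ NN p f + NN p g := by
  unfold NN
  rw [← Summable.tsum_add hf hg]
  exact Summable.tsum_le_tsum (fun j => abs_add_rpow hp0 hp1 (f j) (g j))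
    (mem_add hp0 hp1 hf hg) (Summable.add hf hg)

lemma mem_smul {p : ℝ} (c : ℝ) {f : ℕ → ℝ}
    (hf : MemLpSeq p f) : MemLpSeq p (fun j => c * f j) := by
  unfold MemLpSeq
  simp_rw [abs_mul, Real.mul_rpow (abs_nonneg _) (abs_nonneg _)]
  exact Summable.mul_left _ hf

lemma NN_smul {p : ℝ} (c : ℝ) (f : ℕ → ℝ) :
    NN p (fun j => c * f j) = |c| ^ p * NN p f := by
  unfold NN
  simp_rw [abs_mul, Real.mul_rpow (abs_nonneg _) (abs_nonneg _)]
  exact tsum_mul_left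

lemma mem_zero {p : ℝ} (hp0 : 0 < p) : MemLpSeq p (fun _ => 0) := by
  unfold MemLpSeq
  simp only [abs_zero, Real.zero_rpow hp0.ne']
  exact summable_zero

lemma sum_le_NN {p : ℝ} {f : ℕ → ℝ} (hf : MemLpSeq p f) (I : Finset ℕ) :
    ∑ i ∈ I, |f i| ^ p ≤ NN p f :=
  Summable.sum_le_tsum I (fun j _ => Real.rpow_nonneg (abs_nonneg _) _) hf

lemma abs_le_NN {p : ℝ} (hp0 : 0 < p) {f : ℕ → ℝ} (hf : MemLpSeq p f) (i : ℕ) :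
    |f i| ≤ (NN p f) ^ (1 / p) := by
  have h := sum_le_NN hf {i}
  rw [Finset.sum_singleton] at h
  have := Real.rpow_le_rpow (Real.rpow_nonneg (abs_nonneg _) _) h (one_div_pos.2 hp0).le
  rwa [← Real.rpow_mul (abs_nonneg _), mul_one_div_cancel hp0.ne', Real.rpow_one] at this

def comb (x : ℕ → ℕ → ℝ) (H : Finset ℕ) (c : ℕ → ℝ) : ℕ → ℝ := fun j => ∑ n ∈ H, c n * x n j

lemma comb_empty (x : ℕ → ℕ → ℝ) (c : ℕ → ℝ) : comb x ∅ c = fun _ => 0 := by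
  funext j; simp [comb]

lemma comb_insert (x : ℕ → ℕ → ℝ) {H : Finset ℕ} {k : ℕ} (hk : k ∉ H) (c : ℕ → ℝ) :
    comb x (insert k H) c = (fun j => c k * x k j) + comb x H c := by
  funext j; simp [comb, Finset.sum_insert hk]

lemma comb_add (x : ℕ → ℕ → ℝ) (H : Finset ℕ) (c d : ℕ → ℝ) :
    comb x H (fun n => c n + d n) = comb x H c + comb x H d := by
  funext j; simp [comb, add_mul, Finset.sum_add_distrib]

lemma comb_smul (x : ℕ → ℕ → ℝ) (H : Finset ℕ) (a : ℝ) (c : ℕ → ℝ) :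
    comb x H (fun n => a * c n) = fun j => a * comb x H c j := by
  funext j; simp [comb, mul_assoc, Finset.mul_sum]

lemma mem_comb {p : ℝ} (hp0 : 0 < p) (hp1 : p < 1) {x : ℕ → ℕ → ℝ}
    (hx : ∀ n, MemLpSeq p (x n)) (H : Finset ℕ) (c : ℕ → ℝ) : MemLpSeq p (comb x H c) := by
  induction H using Finset.induction_on with
  | empty => rw [comb_empty]; exact mem_zero hp0
  | insert k H hk ih =>
    rw [comb_insert x hk]
    exact mem_add hp0 hp1 (mem_smul _ (hx k)) ih

lemma xs_comb {p : ℝ} (hp0 : 0 < p) (hp1 : p < 1) {x : ℕ → ℕ → ℝ} {xs : ℕ → (ℕ → ℝ) → ℝ}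
    (hb : IsLpBasis p x xs) (H : Finset ℕ) (c : ℕ → ℝ) (m : ℕ) :
    xs m (comb x H c) = if m ∈ H then c m else 0 := by
  induction H using Finset.induction_on with
  | empty =>
    have := hb.map_smul m 0 _ (mem_zero hp0)
    simpa [comb_empty] using this
  | insert k H hk ih =>
    rw [comb_insert x hk, hb.map_add m _ _ (mem_smul _ (hb.mem k)) (mem_comb hp0 hp1 hb.mem H c),
      hb.map_smul m _ _ (hb.mem k), hb.biorth, ih]
    by_cases h : m = k
    · subst h; simp [hk]
    · simp [h]

/-- convexity-type lemma: coefficients in `[0,1]` are controlled by subset sums. -/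
lemma NN_theta {p : ℝ} (hp0 : 0 < p) (hp1 : p < 1) {x : ℕ → ℕ → ℝ}
    (hx : ∀ n, MemLpSeq p (x n)) (G : Finset ℕ) (s : ℕ → ℝ) (D : ℝ)
    (hD : ∀ H ⊆ G, NN p (comb x H s) ≤ D) (θ : ℕ → ℝ) (hθ : ∀ n, θ n ∈ Set.Icc (0 : ℝ) 1) :
    NN p (comb x G (fun n => s n * θ n)) ≤ D / (2 ^ p - 1) := by
  have h2 : (1 : ℝ) < 2 ^ p := Real.one_lt_rpow (by norm_num) hp0
  set S : Set ℝ := {r | ∃ θ : ℕ → ℝ, (∀ n, θ n ∈ Set.Icc (0 : ℝ) 1) ∧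
    r = NN p (comb x G (fun n => s n * θ n))} with hS
  have bd : BddAbove S := by
    have key : ∀ G : Finset ℕ, ∃ M, ∀ θ : ℕ → ℝ, (∀ n, θ n ∈ Set.Icc (0 : ℝ) 1) →
        NN p (comb x G (fun n => s n * θ n)) ≤ M := by
      intro G
      induction G using Finset.induction_on with
      | empty => exact ⟨0, fun θ _ => by simp [comb, NN, Real.zero_rpow hp0.ne']⟩
      | insert k H hk ih =>
        obtain ⟨M, hM⟩ := ih
        refine ⟨|s k| ^ p * NN p (x k) + M, fun θ hθ => ?_⟩
        rw [comb_insert x hk]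
        refine (NN_add hp0 hp1 (mem_smul _ (hx k)) (mem_comb hp0 hp1 hx H _)).trans ?_
        refine add_le_add ?_ (hM θ hθ)
        rw [NN_smul]
        refine mul_le_mul_of_nonneg_right ?_ (NN_nonneg _ _)
        refine Real.rpow_le_rpow (abs_nonneg _) ?_ hp0.le
        rw [abs_mul, abs_of_nonneg (hθ k).1]
        exact mul_le_of_le_one_right (abs_nonneg _) (hθ k).2
    obtain ⟨M, hM⟩ := key G
    exact ⟨M, by rintro r ⟨θ, hθ, rfl⟩; exact hM θ hθ⟩
  have hmem : NN p (comb x G (fun n => s n * θ n)) ∈ S := ⟨θ, hθ, rfl⟩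
  have hT : sSup S ≤ (D + sSup S) / 2 ^ p := by
    refine csSup_le ⟨_, hmem⟩ ?_
    rintro r ⟨θ, hθ, rfl⟩
    classical
    set β : ℕ → ℝ := fun n => if 1 / 2 ≤ θ n then 1 else 0 with hβ
    set θ' : ℕ → ℝ := fun n => 2 * θ n - β n with hθ'
    have hθ'm : ∀ n, θ' n ∈ Set.Icc (0 : ℝ) 1 := by
      intro n
      have := hθ n
      simp only [hθ', hβ, Set.mem_Icc] at this ⊢
      split_ifs with h
      · constructor <;> linarith
      · constructor <;> linarith
    have e1 : comb x G (fun n => s n * β n) = comb x (G.filter (fun n => 1 / 2 ≤ θ n)) s := by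
      funext j
      simp only [comb, hβ, Finset.sum_filter]
      refine Finset.sum_congr rfl fun n _ => ?_
      split_ifs <;> simp
    have e2 : comb x G (fun n => s n * θ n) =
        fun j => (1 / 2 : ℝ) * (comb x G (fun n => s n * β n) + comb x G (fun n => s n * θ' n)) j := by
      rw [← comb_add, ← comb_smul]
      congr 1; funext n; simp only [hθ']; ring
    rw [e2, NN_smul, abs_of_pos (by norm_num : (0 : ℝ) < 1 / 2),
      Real.div_rpow (by norm_num) (by norm_num), Real.one_rpow, one_div_mul_eq_div]
    refine div_le_div_of_nonneg_right ?_ (by positivity)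
    refine (NN_add hp0 hp1 (mem_comb hp0 hp1 hx G _) (mem_comb hp0 hp1 hx G _)).trans ?_
    refine add_le_add ?_ (le_csSup bd ⟨θ', hθ'm, rfl⟩)
    rw [e1]; exact hD _ (Finset.filter_subset _ _)
  refine (le_csSup bd hmem).trans ?_
  rw [le_div_iff₀ (by linarith)]
  rw [le_div_iff₀ (by linarith)] at hT
  linarith

lemma qg_NN {p : ℝ} (hp0 : 0 < p) {x : ℕ → ℕ → ℝ} {xs : ℕ → (ℕ → ℝ) → ℝ}
    (hqg : QuasiGreedy p x xs) : ∃ C ≥ (1 : ℝ), ∀ f, MemLpSeq p f → ∀ A : Finset ℕ,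
    GreedySet (fun n => xs n f) A → NN p (comb x A (fun n => xs n f)) ≤ C * NN p f := by
  obtain ⟨C, hC, h⟩ := hqg
  refine ⟨C ^ p, Real.one_le_rpow hC hp0.le, fun f hf A hA => ?_⟩
  have := Real.rpow_le_rpow (pNorm_nonneg _ _) (h f hf A hA) hp0.le
  rw [Real.mul_rpow (by linarith) (pNorm_nonneg _ _), pNorm_rpow hp0, pNorm_rpow hp0] at this
  exact this

lemma qg_const {p : ℝ} (hp0 : 0 < p) (hp1 : p < 1) {x : ℕ → ℕ → ℝ} {xs : ℕ → (ℕ → ℝ) → ℝ}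
    (hb : IsLpBasis p x xs) {C : ℝ} (hC : ∀ f, MemLpSeq p f → ∀ A : Finset ℕ,
    GreedySet (fun n => xs n f) A → NN p (comb x A (fun n => xs n f)) ≤ C * NN p f)
    (s : ℕ → ℝ) (hs : ∀ n, |s n| = 1) (G H : Finset ℕ) (hHG : H ⊆ G) :
    NN p (comb x H s) ≤ C * NN p (comb x G s) := by
  have h := hC _ (mem_comb hp0 hp1 hb.mem G s) H (by
    intro n hn k hk
    simp only [xs_comb hp0 hp1 hb]
    rw [if_pos (hHG hn), hs]
    split_ifs
    · exact (hs k).le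
    · simp)
  convert h using 2
  funext j
  refine Finset.sum_congr rfl fun n hn => ?_
  simp only [xs_comb hp0 hp1 hb]
  rw [if_pos (hHG hn)]

lemma slice_finite {p : ℝ} (hp0 : 0 < p) (hp1 : p < 1) {x : ℕ → ℕ → ℝ} {xs : ℕ → (ℕ → ℝ) → ℝ}
    (hb : IsLpBasis p x xs) {f : ℕ → ℝ} (hf : MemLpSeq p f) {t : ℝ} (ht : 0 < t) :
    {n | t ≤ |xs n f|}.Finite := by
  obtain ⟨b, hbd⟩ := hb.bdd
  obtain ⟨A, c, hA⟩ := hb.dense f hf (t / (|b| + 1)) (by positivity)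
  refine A.finite_toSet.subset fun n hn => ?_
  by_contra hnA
  have hnA' : n ∉ A := hnA
  have e : (fun j => f j - ∑ n ∈ A, c n * x n j) = f + fun j => (-1) * comb x A c j := by
    funext j; simp [comb]; ring
  have hm := mem_comb hp0 hp1 hb.mem A c
  have h1 := hbd n _ (mem_add hp0 hp1 hf (mem_smul (-1) hm))
  rw [hb.map_add n _ _ hf (mem_smul (-1) hm), hb.map_smul n _ _ hm, xs_comb hp0 hp1 hb,
    if_neg hnA', mul_zero, add_zero] at h1
  rw [e] at hA
  have h2 := pNorm_nonneg p (f + fun j => (-1) * comb x A c j)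
  rw [lt_div_iff₀ (by positivity)] at hA
  have h3 : t ≤ |xs n f| := hn
  have := mul_le_mul_of_nonneg_right (le_abs_self b) h2
  nlinarith

lemma slice_bound {p : ℝ} (hp0 : 0 < p) (hp1 : p < 1) {x : ℕ → ℕ → ℝ} {xs : ℕ → (ℕ → ℝ) → ℝ}
    (hb : IsLpBasis p x xs) {C : ℝ} (hC1 : 1 ≤ C) (hC : ∀ f, MemLpSeq p f → ∀ A : Finset ℕ,
    GreedySet (fun n => xs n f) A → NN p (comb x A (fun n => xs n f)) ≤ C * NN p f)
    {f : ℕ → ℝ} (hf : MemLpSeq p f) (hf1 : NN p f ≤ 1) {δ t η : ℝ} (hδ : 0 < δ) (ht : δ ≤ t)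
    (hη : 0 < η) (hη' : η ^ p * (C / (2 ^ p - 1)) ≤ δ ^ p / 2)
    (s : ℕ → ℝ) (hs : ∀ n, |s n| = 1) (hsa : ∀ n, xs n f = s n * |xs n f|)
    (B : Finset ℕ) (hB : ∀ n ∈ B, t ≤ |xs n f| ∧ |xs n f| < t + η) :
    NN p (comb x B s) ≤ C * (4 * C / δ ^ p) := by
  classical
  have ht0 : 0 < t := by linarith
  have fin1 := slice_finite hp0 hp1 hb hf ht0
  have fin2 := slice_finite hp0 hp1 hb hf (show 0 < t + η by linarith)
  set G1 := fin1.toFinset with hG1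
  set G2 := fin2.toFinset with hG2
  set a : ℕ → ℝ := fun n => xs n f with ha
  set G := G1 \ G2 with hG
  have hGm : ∀ n, n ∈ G ↔ t ≤ |xs n f| ∧ |xs n f| < t + η := by
    intro n; simp [hG, hG1, hG2]
  have hBG : B ⊆ G := fun n hn => (hGm n).2 (hB n hn)
  have h21 : G2 ⊆ G1 := by
    intro n; simp only [hG1, hG2, Set.Finite.mem_toFinset, Set.mem_setOf_eq]; intro h; linarith
  have g1 : NN p (comb x G1 a) ≤ C * NN p f := hC f hf G1 (by
    intro n hn k hk
    simp only [hG1, Set.Finite.mem_toFinset, Set.mem_setOf_eq, not_le] at hn hk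
    linarith)
  have g2 : NN p (comb x G2 a) ≤ C * NN p f := hC f hf G2 (by
    intro n hn k hk
    simp only [hG2, Set.Finite.mem_toFinset, Set.mem_setOf_eq, not_le] at hn hk
    linarith)
  have hmem := fun H c => mem_comb hp0 hp1 hb.mem H c
  have eu : comb x G a = comb x G1 a + fun j => (-1) * comb x G2 a j := by
    funext j
    have := Finset.sum_sdiff (f := fun n => a n * x n j) h21
    simp only [comb, Pi.add_apply, hG]
    linarith
  have hu : NN p (comb x G a) ≤ 2 * C := by
    rw [eu]
    refine (NN_add hp0 hp1 (hmem _ _) (mem_smul _ (hmem _ _))).trans ?_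
    rw [NN_smul]; simp only [abs_neg, abs_one, Real.one_rpow, one_mul]
    nlinarith
  set Z := NN p (comb x G s) with hZ
  have hZ0 : 0 ≤ Z := NN_nonneg _ _
  set θ : ℕ → ℝ := fun n => max 0 (min 1 ((|xs n f| - t) / η)) with hθ
  have hth := NN_theta hp0 hp1 hb.mem G s (C * Z)
    (fun H hH => qg_const hp0 hp1 hb hC s hs G H hH) θ
    (fun n => ⟨le_max_left _ _, max_le zero_le_one (min_le_left _ _)⟩)
  have hθG : ∀ n ∈ G, θ n = (|xs n f| - t) / η := by
    intro n hn
    obtain ⟨h1, h2⟩ := (hGm n).1 hn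
    have q0 : 0 ≤ (|xs n f| - t) / η := div_nonneg (by linarith) hη.le
    have q1 : (|xs n f| - t) / η ≤ 1 := by rw [div_le_one hη]; linarith
    simp only [hθ]
    rw [min_eq_right q1, max_eq_right q0]
  have es : (fun j => t * comb x G s j) =
      comb x G a + fun j => (-η) * comb x G (fun n => s n * θ n) j := by
    rw [← comb_smul, ← comb_smul, ← comb_add]
    funext j
    refine Finset.sum_congr rfl fun n hn => ?_
    simp only
    rw [hθG n hn]
    have := hsa n
    have e3 : a n = s n * |xs n f| := this
    rw [e3]; field_simp; ring
  have hmain : t ^ p * Z ≤ 2 * C + η ^ p * (C * Z / (2 ^ p - 1)) := by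
    have := NN_add hp0 hp1 (hmem G a) (mem_smul (-η) (hmem G (fun n => s n * θ n)))
    rw [← es, NN_smul, NN_smul, abs_neg, abs_of_pos hη, abs_of_pos ht0] at this
    refine this.trans (add_le_add hu ?_)
    exact mul_le_mul_of_nonneg_left hth (by positivity)
  have hδt : δ ^ p ≤ t ^ p := Real.rpow_le_rpow hδ.le ht hp0.le
  have hδp : 0 < δ ^ p := by positivity
  have hZb : Z ≤ 4 * C / δ ^ p := by
    rw [le_div_iff₀ hδp]
    have e : η ^ p * (C * Z / (2 ^ p - 1)) = η ^ p * (C / (2 ^ p - 1)) * Z := by ring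
    rw [e] at hmain
    have := mul_le_mul_of_nonneg_right hη' hZ0
    have := mul_le_mul_of_nonneg_right hδt hZ0
    linarith
  refine (qg_const hp0 hp1 hb hC s hs G B hBG).trans ?_
  exact mul_le_mul_of_nonneg_left hZb (by linarith)

def ee (j : ℕ) : ℕ → ℝ := fun i => if i = j then 1 else 0

lemma ee_hasSum {p : ℝ} (hp0 : 0 < p) (j : ℕ) : HasSum (fun i => |ee j i| ^ p) 1 := by
  have : (fun i => |ee j i| ^ p) = fun i => if i = j then (1 : ℝ) else 0 := by
    funext i; unfold ee; split_ifs <;> simp [Real.zero_rpow hp0.ne']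
  rw [this]; exact hasSum_ite_eq j 1

lemma mem_ee {p : ℝ} (hp0 : 0 < p) (j : ℕ) : MemLpSeq p (ee j) := (ee_hasSum hp0 j).summable

lemma NN_ee {p : ℝ} (hp0 : 0 < p) (j : ℕ) : NN p (ee j) = 1 := (ee_hasSum hp0 j).tsum_eq

/-- The basis vector is linked to a coordinate. -/
lemma exists_coord {p : ℝ} (hp0 : 0 < p) (hp1 : p < 1) {x : ℕ → ℕ → ℝ} {xs : ℕ → (ℕ → ℝ) → ℝ}
    (hb : IsLpBasis p x xs) : ∃ δ > 0, ∀ n, ∃ j,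
      δ ≤ |x n j| ∧ δ ≤ |xs n (ee j)| ∧ 0 ≤ x n j * xs n (ee j) := by
  obtain ⟨b₀, hbd₀⟩ := hb.bdd
  obtain ⟨R₀, hR₀⟩ := hb.norm_ub
  set b := max b₀ 1 with hbdef
  set R := max R₀ 1 with hRdef
  have hb1 : 1 ≤ b := le_max_right _ _
  have hR1 : 1 ≤ R := le_max_right _ _
  have hbd : ∀ n f, MemLpSeq p f → |xs n f| ≤ b * pNorm p f := fun n f hf =>
    (hbd₀ n f hf).trans (mul_le_mul_of_nonneg_right (le_max_left _ _) (pNorm_nonneg _ _))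
  have hR : ∀ n, pNorm p (x n) ≤ R := fun n => (hR₀ n).trans (le_max_left _ _)
  have hRN : ∀ n, NN p (x n) ≤ R ^ p := fun n => by
    rw [← pNorm_rpow hp0]; exact Real.rpow_le_rpow (pNorm_nonneg _ _) (hR n) hp0.le
  have hy : ∀ n j, |xs n (ee j)| ≤ b := fun n j => by
    have := hbd n _ (mem_ee hp0 j)
    have e : pNorm p (ee j) = 1 := by
      have : pNorm p (ee j) = (NN p (ee j)) ^ (1 / p) := rfl
      rw [this, NN_ee hp0, Real.one_rpow]
    rwa [e, mul_one] at this
  have hxR : ∀ n j, |x n j| ≤ R := fun n j =>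
    (abs_le_NN hp0 (hb.mem n) j).trans (hR n)
  set P := b ^ p * R ^ p with hP
  have hP0 : 0 < P := by positivity
  set δ₀ : ℝ := (1 / (2 * P)) ^ (1 / (1 - p)) with hδ₀
  have hδ₀0 : 0 < δ₀ := by positivity
  have hδ₀p : δ₀ ^ (1 - p) = 1 / (2 * P) := by
    rw [hδ₀, ← Real.rpow_mul (by positivity), one_div_mul_cancel (by linarith), Real.rpow_one]
  have key : ∀ n, ∃ j, δ₀ ≤ x n j * xs n (ee j) := by
    intro n
    by_contra hcon
    push Not at hcon
    -- tail
    have hten := hb.mem n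
    have hs : HasSum (fun j => |x n j| ^ p) (NN p (x n)) := hten.hasSum
    obtain ⟨J, hJ⟩ : ∃ J : Finset ℕ, NN p (x n) - ∑ j ∈ J, |x n j| ^ p < (1 / (4 * b)) ^ p := by
      have h := hs.eventually (lt_mem_nhds (show NN p (x n) - (1 / (4 * b)) ^ p < NN p (x n) by
        have : (0 : ℝ) < (1 / (4 * b)) ^ p := by positivity
        linarith))
      obtain ⟨J, hJ⟩ := h.exists
      exact ⟨J, by linarith⟩
    have hmJ : MemLpSeq p (comb ee J (x n)) := mem_comb hp0 hp1 (mem_ee hp0) J _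
    have hcoord : ∀ j, comb ee J (x n) j = if j ∈ J then x n j else 0 := by
      intro j; simp [comb, ee]
    set g : ℕ → ℝ := fun j => if j ∈ J then 0 else x n j with hg
    have exg : x n = comb ee J (x n) + g := by
      funext j; rw [Pi.add_apply, hcoord]; simp only [hg]; split_ifs <;> simp
    have hsplit : ∀ j, |g j| ^ p = |x n j| ^ p - (if j ∈ J then |x n j| ^ p else 0) := by
      intro j; simp only [hg]; split_ifs <;> simp [Real.zero_rpow hp0.ne']
    have hgs : HasSum (fun j => |g j| ^ p) (NN p (x n) - ∑ j ∈ J, |x n j| ^ p) := by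
      simp_rw [hsplit]
      refine hs.sub ?_
      have := hasSum_sum_of_ne_finset_zero (f := fun j => if j ∈ J then |x n j| ^ p else 0)
        (s := J) (L := SummationFilter.unconditional ℕ) (by intro j hj; simp [hj])
      have e : ∑ j ∈ J, (if j ∈ J then |x n j| ^ p else 0) = ∑ j ∈ J, |x n j| ^ p :=
        Finset.sum_congr rfl fun j hj => by simp [hj]
      rw [e] at this
      exact this
    have hgm : MemLpSeq p g := hgs.summable
    have hgn : pNorm p g ≤ 1 / (4 * b) := by
      have h0 : NN p g < (1 / (4 * b)) ^ p := by
        have : NN p g = _ := hgs.tsum_eq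
        rw [this]; exact hJ
      rw [← pNorm_rpow hp0] at h0
      exact ((Real.rpow_lt_rpow_iff (pNorm_nonneg _ _) (by positivity) hp0).1 h0).le
    have hxg : |xs n g| ≤ 1 / 4 := by
      refine (hbd n g hgm).trans ?_
      calc b * pNorm p g ≤ b * (1 / (4 * b)) := mul_le_mul_of_nonneg_left hgn (by linarith)
        _ = 1 / 4 := by field_simp
    have hxsJ : ∀ J : Finset ℕ, xs n (comb ee J (x n)) = ∑ j ∈ J, x n j * xs n (ee j) := by
      intro J
      induction J using Finset.induction_on with
      | empty =>
        have := hb.map_smul n 0 _ (mem_zero hp0)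
        simpa [comb_empty] using this
      | insert k H hk ih =>
        rw [comb_insert ee hk, hb.map_add n _ _ (mem_smul _ (mem_ee hp0 k))
          (mem_comb hp0 hp1 (mem_ee hp0) H _), hb.map_smul n _ _ (mem_ee hp0 k), ih,
          Finset.sum_insert hk]
    have h1 : (1 : ℝ) = xs n (comb ee J (x n)) + xs n g := by
      rw [← hb.map_add n _ _ hmJ hgm, ← exg, hb.biorth]; simp
    rw [hxsJ] at h1
    have hterm : ∀ j ∈ J, x n j * xs n (ee j) ≤ δ₀ ^ (1 - p) * b ^ p * |x n j| ^ p := by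
      intro j _
      rcases le_or_gt (x n j * xs n (ee j)) 0 with h | h
      · exact h.trans (by positivity)
      · calc x n j * xs n (ee j)
            = (x n j * xs n (ee j)) ^ (1 - p) * (x n j * xs n (ee j)) ^ p := by
              rw [← Real.rpow_add h]; simp
          _ ≤ δ₀ ^ (1 - p) * (b * |x n j|) ^ p := by
              refine mul_le_mul (Real.rpow_le_rpow h.le (hcon j).le (by linarith))
                (Real.rpow_le_rpow h.le ?_ hp0.le) (by positivity) (by positivity)
              refine (le_abs_self _).trans ?_
              rw [abs_mul, mul_comm]
              exact mul_le_mul_of_nonneg_right (hy n j) (abs_nonneg _)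
          _ = _ := by rw [Real.mul_rpow (by linarith) (abs_nonneg _)]; ring
    have h2 := Finset.sum_le_sum hterm
    rw [← Finset.mul_sum, hδ₀p] at h2
    have h3 : ∑ j ∈ J, |x n j| ^ p ≤ R ^ p := (sum_le_NN hten J).trans (hRN n)
    have h4 : 1 / (2 * P) * b ^ p * ∑ j ∈ J, |x n j| ^ p ≤ 1 / (2 * P) * b ^ p * R ^ p :=
      mul_le_mul_of_nonneg_left h3 (by positivity)
    have h5 : 1 / (2 * P) * b ^ p * R ^ p = 1 / 2 := by
      rw [mul_assoc, ← hP]; field_simp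
    have := (abs_le.1 hxg).2
    linarith
  refine ⟨min (δ₀ / b) (δ₀ / R), lt_min (by positivity) (by positivity), fun n => ?_⟩
  obtain ⟨j, hj⟩ := key n
  have habs : δ₀ ≤ |x n j| * |xs n (ee j)| := by
    rw [← abs_mul]; exact hj.trans (le_abs_self _)
  refine ⟨j, (min_le_left _ _).trans ?_, (min_le_right _ _).trans ?_, hδ₀0.le.trans hj⟩
  · rw [div_le_iff₀ (by linarith)]
    exact habs.trans (mul_le_mul_of_nonneg_left (hy n j) (abs_nonneg _))
  · rw [div_le_iff₀ (by linarith), mul_comm]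
    exact habs.trans (mul_le_mul_of_nonneg_right (hxR n j) (abs_nonneg _))

lemma fiber_bound {p : ℝ} (hp0 : 0 < p) (hp1 : p < 1) {x : ℕ → ℕ → ℝ} {xs : ℕ → (ℕ → ℝ) → ℝ}
    (hb : IsLpBasis p x xs) {C : ℝ} (hC1 : 1 ≤ C) (hC : ∀ f, MemLpSeq p f → ∀ A : Finset ℕ,
    GreedySet (fun n => xs n f) A → NN p (comb x A (fun n => xs n f)) ≤ C * NN p f)
    {δ : ℝ} (hδ : 0 < δ) : ∃ K : ℕ, ∀ j : ℕ, ∀ A : Finset ℕ,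
      (∀ n ∈ A, δ ≤ |x n j| ∧ δ ≤ |xs n (ee j)| ∧ 0 ≤ x n j * xs n (ee j)) → A.card ≤ K := by
  classical
  obtain ⟨b, hbd⟩ := hb.bdd
  have hy : ∀ n j, |xs n (ee j)| ≤ b := fun n j => by
    have := hbd n _ (mem_ee hp0 j)
    have e : pNorm p (ee j) = 1 := by
      have : pNorm p (ee j) = (NN p (ee j)) ^ (1 / p) := rfl
      rw [this, NN_ee hp0, Real.one_rpow]
    rwa [e, mul_one] at this
  have h2 : (1 : ℝ) < 2 ^ p := Real.one_lt_rpow (by norm_num) hp0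
  have h2' : (0 : ℝ) < 2 ^ p - 1 := by linarith
  set w : ℝ := δ ^ p / 2 / (C / (2 ^ p - 1)) with hw
  have hw0 : 0 < w := by positivity
  set η : ℝ := w ^ (1 / p) with hη
  have hη0 : 0 < η := by positivity
  have hη' : η ^ p * (C / (2 ^ p - 1)) ≤ δ ^ p / 2 := by
    rw [hη, ← Real.rpow_mul hw0.le, one_div_mul_cancel hp0.ne', Real.rpow_one, hw,
      div_mul_cancel₀ _ (by positivity)]
  set M : ℝ := C * (4 * C / δ ^ p) with hM
  set k : ℕ := ⌊M ^ (1 / p) / δ⌋₊ with hk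
  set L : ℕ := ⌊(b - δ) / η⌋₊ + 1 with hL
  refine ⟨k * L, fun j A hA => ?_⟩
  have := Finset.card_le_mul_card_image_of_maps_to (s := A) (t := Finset.range L)
    (f := fun n => ⌊(|xs n (ee j)| - δ) / η⌋₊) (by
      intro n hn
      simp only [Finset.mem_range, hL, Finset.coe_range, Set.mem_Iio]
      refine Nat.lt_succ_of_le (Nat.floor_le_floor ?_)
      refine div_le_div_of_nonneg_right ?_ hη0.le
      have := hy n j; linarith) k ?_
  · simpa using this
  · intro l _
    set B := A.filter (fun n => ⌊(|xs n (ee j)| - δ) / η⌋₊ = l) with hB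
    set s : ℕ → ℝ := fun n => if 0 ≤ xs n (ee j) then 1 else -1 with hs
    have hs1 : ∀ n, |s n| = 1 := by intro n; simp only [hs]; split_ifs <;> simp
    have hsa : ∀ n, xs n (ee j) = s n * |xs n (ee j)| := by
      intro n; simp only [hs]; split_ifs with h
      · rw [abs_of_nonneg h, one_mul]
      · rw [abs_of_neg (not_le.1 h)]; ring
    have hN := slice_bound hp0 hp1 hb hC1 hC (mem_ee hp0 j) (NN_ee hp0 j).le hδ
      (t := δ + l * η) (le_add_of_nonneg_right (by positivity)) hη0 hη' s hs1 hsa B (by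
        intro n hn
        rw [hB, Finset.mem_filter] at hn
        obtain ⟨hnA, hfl⟩ := hn
        have h0 : 0 ≤ (|xs n (ee j)| - δ) / η :=
          div_nonneg (by linarith [(hA n hnA).2.1]) hη0.le
        rw [Nat.floor_eq_iff h0] at hfl
        obtain ⟨f1, f2⟩ := hfl
        rw [le_div_iff₀ hη0] at f1
        rw [div_lt_iff₀ hη0] at f2
        constructor
        · linarith
        · linarith)
    have hco := abs_le_NN hp0 (mem_comb hp0 hp1 hb.mem B s) j
    have hco2 : (NN p (comb x B s)) ^ (1 / p) ≤ M ^ (1 / p) :=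
      Real.rpow_le_rpow (NN_nonneg _ _) hN (one_div_pos.2 hp0).le
    have hlow : (B.card : ℝ) * δ ≤ comb x B s j := by
      rw [← nsmul_eq_mul]
      refine Finset.card_nsmul_le_sum B _ δ fun n hn => ?_
      obtain ⟨a1, a2, a3⟩ := hA n (Finset.mem_filter.1 hn).1
      refine a1.trans (le_of_eq ?_)
      simp only [hs]
      split_ifs with h
      · have hpos : 0 < xs n (ee j) := by
          rw [abs_of_nonneg h] at a2; linarith
        rw [one_mul, abs_of_nonneg (nonneg_of_mul_nonneg_left a3 hpos)]
      · have hneg : xs n (ee j) < 0 := not_le.1 h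
        have : x n j ≤ 0 := by
          by_contra hh
          push Not at hh
          nlinarith [mul_neg_of_pos_of_neg hh hneg]
        rw [abs_of_nonpos this]; ring
    refine Nat.le_floor ?_
    rw [le_div_iff₀ hδ]
    exact hlow.trans ((le_abs_self _).trans (hco.trans hco2))

lemma avg_bound {p : ℝ} (hp0 : 0 < p) (hp1 : p < 1) {δ : ℝ} (hδ : 0 < δ) (v : ℕ → ℝ)
    (A : Finset ℕ) (n : ℕ) (hn : n ∈ A) (hv : δ ≤ |v n|) :
    2 ^ A.card * δ ^ p ≤ 2 * ∑ B ∈ A.powerset, |∑ k ∈ B, 1 * v k| ^ p := by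
  classical
  obtain ⟨A', hnA', rfl⟩ : ∃ A', n ∉ A' ∧ insert n A' = A :=
    ⟨A.erase n, Finset.notMem_erase _ _, Finset.insert_erase hn⟩
  rw [Finset.sum_powerset_insert hnA', ← Finset.sum_add_distrib, Finset.card_insert_of_notMem hnA']
  have : (A'.powerset.card : ℝ) * δ ^ p ≤ ∑ B ∈ A'.powerset,
      (|∑ k ∈ B, 1 * v k| ^ p + |∑ k ∈ insert n B, 1 * v k| ^ p) := by
    rw [← nsmul_eq_mul]
    refine Finset.card_nsmul_le_sum _ _ _ fun B hB => ?_
    have hnB : n ∉ B := fun h => hnA' (Finset.mem_powerset.1 hB h)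
    rw [Finset.sum_insert hnB]
    have h := abs_add_rpow hp0 hp1 (1 * v n + ∑ k ∈ B, 1 * v k) (-∑ k ∈ B, 1 * v k)
    rw [add_neg_cancel_right, abs_neg, one_mul] at h
    have := Real.rpow_le_rpow hδ.le hv hp0.le
    rw [one_mul]
    linarith
  rw [Finset.card_powerset] at this
  push_cast at this
  rw [pow_succ]
  linarith

/-- Intermediate estimate in the proof of the main theorem: for a quasi-greedy
basis of `ℓ_p`, `0<p<1`, with `q = (1-p+p²)/(p²-p³)` one has
`φ_l(m) ≥ c·m^(1/p)/(1+log m)^q`. -/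
theorem stmt4 (p : ℝ) (hp0 : 0 < p) (hp1 : p < 1)
    (x : ℕ → ℕ → ℝ) (xs : ℕ → (ℕ → ℝ) → ℝ)
    (hbasis : IsLpBasis p x xs) (hqg : QuasiGreedy p x xs) :
    ∃ c : ℝ, 0 < c ∧ ∀ m : ℕ, 1 ≤ m → ∀ A : Finset ℕ, m ≤ A.card →
      c * (m : ℝ) ^ (1 / p) / (1 + Real.log m) ^ ((1 - p + p ^ 2) / (p ^ 2 - p ^ 3))
        ≤ pNorm p (fun j => ∑ n ∈ A, x n j) := by
  classical
  obtain ⟨C, hC1, hC⟩ := qg_NN hp0 hqg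
  obtain ⟨δ, hδ, hco⟩ := exists_coord hp0 hp1 hbasis
  choose J hJ using hco
  obtain ⟨K, hK⟩ := fiber_bound hp0 hp1 hbasis hC1 hC hδ
  have hδp : 0 < δ ^ p := by positivity
  set c₀ : ℝ := δ ^ p / (2 * C * (K + 1)) with hc₀
  have hc₀0 : 0 < c₀ := by positivity
  refine ⟨c₀ ^ (1 / p), by positivity, fun m hm A hA => ?_⟩
  have hm1 : (1 : ℝ) ≤ m := by exact_mod_cast hm
  have hq : 0 ≤ (1 - p + p ^ 2) / (p ^ 2 - p ^ 3) := by
    refine div_nonneg (by nlinarith) ?_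
    have : p ^ 2 - p ^ 3 = p ^ 2 * (1 - p) := by ring
    rw [this]; exact mul_nonneg (by positivity) (by linarith)
  have hden : 1 ≤ (1 + Real.log m) ^ ((1 - p + p ^ 2) / (p ^ 2 - p ^ 3)) :=
    Real.one_le_rpow (by linarith [Real.log_nonneg hm1]) hq
  refine (div_le_self (by positivity) hden).trans ?_
  have ecomb : (fun j => ∑ n ∈ A, x n j) = comb x A (fun _ => 1) := by
    funext j; simp [comb]
  rw [ecomb]
  set F := NN p (comb x A (fun _ => 1)) with hF
  have hpn : pNorm p (comb x A (fun _ => 1)) = F ^ (1 / p) := rfl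
  rw [hpn, ← Real.mul_rpow hc₀0.le (by positivity)]
  refine Real.rpow_le_rpow (by positivity) ?_ (one_div_pos.2 hp0).le
  set I := A.image J with hI
  have hcard : A.card ≤ K * I.card := Finset.card_le_mul_card_image A K fun j _ => hK j _ (by
    intro n hn
    obtain ⟨_, rfl⟩ := Finset.mem_filter.1 hn
    exact hJ n)
  have up : ∑ B ∈ A.powerset, ∑ i ∈ I, |∑ k ∈ B, 1 * x k i| ^ p ≤ 2 ^ A.card * (C * F) := by
    have : ∑ B ∈ A.powerset, ∑ i ∈ I, |∑ k ∈ B, 1 * x k i| ^ p ≤ A.powerset.card • (C * F) := by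
      refine Finset.sum_le_card_nsmul _ _ _ fun B hB => ?_
      refine (sum_le_NN (mem_comb hp0 hp1 hbasis.mem B (fun _ => 1)) I).trans ?_
      exact qg_const hp0 hp1 hbasis hC _ (by simp) A B (Finset.mem_powerset.1 hB)
    rw [Finset.card_powerset, nsmul_eq_mul] at this
    push_cast at this
    exact this
  have low : (I.card : ℝ) * (2 ^ A.card * δ ^ p) ≤
      2 * ∑ B ∈ A.powerset, ∑ i ∈ I, |∑ k ∈ B, 1 * x k i| ^ p := by
    rw [Finset.sum_comm, Finset.mul_sum, ← nsmul_eq_mul]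
    refine Finset.card_nsmul_le_sum _ _ _ fun i hi => ?_
    obtain ⟨n, hn, rfl⟩ := Finset.mem_image.1 hi
    exact avg_bound hp0 hp1 hδ (fun k => x k (J n)) A n hn (hJ n).1
  have hIF : (I.card : ℝ) * δ ^ p ≤ 2 * C * F := by
    have h2 : (0 : ℝ) < 2 ^ A.card := by positivity
    refine le_of_mul_le_mul_left ?_ h2
    linarith
  have hmI : (m : ℝ) ≤ (K + 1) * I.card := by
    have : m ≤ (K + 1) * I.card := hA.trans (hcard.trans (Nat.mul_le_mul_right _ (Nat.le_succ _)))
    exact_mod_cast this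
  rw [hc₀, div_mul_eq_mul_div, div_le_iff₀ (by positivity)]
  have hK1 : (0 : ℝ) < K + 1 := by positivity
  calc δ ^ p * m ≤ δ ^ p * ((K + 1) * I.card) := mul_le_mul_of_nonneg_left hmI hδp.le
    _ = (K + 1) * (I.card * δ ^ p) := by ring
    _ ≤ (K + 1) * (2 * C * F) := mul_le_mul_of_nonneg_left hIF hK1.le
    _ = F * (2 * C * (K + 1)) := by ring
end
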